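/- Assume condition (C) and fix K ∈ (K₀,K_M). Then there exists a unique c_* = c_*(K) ∈ (c₁(K), c_M(K)) such that μ_b(K,c) < μ_f(K,c) for c₁(K) < c < c_*, μ_b(K,c) > μ_f(K,c) for c_* < c < c_M(K), and μ_b(K,c_*) = μ_f(K,c_*). In particular, for (c,μ) = (c_*, μ_b(K,c_*)) the system (TV) possesses a heteroclinic cycle consisting of the equilibria (u₁,0), (u₂,0) and two heteroclinic orbits joining them. -/

import Mathlib

open Set Filter MeasureTheory

noncomputable section

namespace TrafficTW

/-- `f(u) = (K u - V(u) - c)/K`. -/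
def fTV (V : ℝ → ℝ) (K c u : ℝ) : ℝ := (K * u - V u - c) / K

/-- `f'(u) = (K - V'(u))/K`. -/
def fdTV (V' : ℝ → ℝ) (K u : ℝ) : ℝ := (K - V' u) / K

/-- `h(u,μ) = f'(u) + μ`. -/
def hTV (V' : ℝ → ℝ) (K μ u : ℝ) : ℝ := fdTV V' K u + μ

/-- `g₁(u) = 1/(τ κ(1/u))`. -/
def g1TV (κ : ℝ → ℝ) (τ u : ℝ) : ℝ := 1 / (τ * κ (1 / u))

/-- `g₂(u) = u/(2 τ κ(1/u))`. -/
def g2TV (κ : ℝ → ℝ) (τ u : ℝ) : ℝ := u / (2 * τ * κ (1 / u))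

/-- The traveling-wave system (TV): `u' = w`, `w' = g₁ f + g₂ h w`. -/
def IsTVSol (V V' κ : ℝ → ℝ) (τ K c μ : ℝ) (u w : ℝ → ℝ) : Prop :=
  (∀ z, HasDerivAt u (w z) z) ∧
  (∀ z, HasDerivAt w
    (g1TV κ τ (u z) * fTV V K c (u z) + g2TV κ τ (u z) * hTV V' K μ (u z) * w z) z)

/-- Assumption (A1), where `V'` and `V''` are the first and second derivatives of `V`. -/
def A1 (V V' V'' : ℝ → ℝ) (UM : ℝ) : Prop :=
  (∀ u ∈ Ici (0:ℝ), HasDerivWithinAt V (V' u) (Ici 0) u) ∧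
  ContinuousOn V' (Ici 0) ∧
  (∀ u ∈ Ioi (0:ℝ), HasDerivAt V' (V'' u) u) ∧
  ContinuousOn V'' (Ioi 0) ∧
  (∀ u, 0 < u → 0 < V' u) ∧ (∃ M, ∀ u, 0 < u → V' u ≤ M) ∧
  Tendsto V' atTop (nhds 0) ∧
  0 < UM ∧ (∀ u, 0 < u → V' u ≤ V' UM) ∧
  (∀ u, 0 < u → (V'' u = 0 ↔ u = UM))

/-- Assumption (A2). -/
def A2 (κ : ℝ → ℝ) : Prop :=
  ContDiffOn ℝ 1 κ (Ioi 0) ∧ ∀ ρ, 0 < ρ → 0 < κ ρ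

/-- `c₀ = -V(0)`. -/
def c0v (V : ℝ → ℝ) : ℝ := - V 0

/-- `c_M(K) = K u_M(K) - V(u_M(K))`, where `uMx` is the function `K ↦ u_M(K)`. -/
def cMf (V : ℝ → ℝ) (uMx : ℝ → ℝ) (K : ℝ) : ℝ := K * uMx K - V (uMx K)

/-- `c_m(K) = K u_m(K) - V(u_m(K))`, where `umx` is the function `K ↦ u_m(K)`. -/
def cmf (V : ℝ → ℝ) (umx : ℝ → ℝ) (K : ℝ) : ℝ := K * umx K - V (umx K)

/-- `c₁(K) = max (c₀, c_m(K))`. -/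
def c1f (V : ℝ → ℝ) (umx : ℝ → ℝ) (K : ℝ) : ℝ := max (c0v V) (cmf V umx K)

/-- `uMx K = u_M(K)` is the unique local maximum point of `u ↦ K u - V(u)`, characterized
by `u_M(K) ∈ (0, U_M)` and `V'(u_M(K)) = K`, for `K ∈ (K₀, K_M)`. -/
def UMaxHyp (V' : ℝ → ℝ) (UM : ℝ) (uMx : ℝ → ℝ) : Prop :=
  ∀ K, V' 0 < K → K < V' UM → uMx K ∈ Ioo 0 UM ∧ V' (uMx K) = K

/-- `umx K = u_m(K)` is the unique local minimum point of `u ↦ K u - V(u)`, characterized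
by `u_m(K) ∈ (U_M, ∞)` and `V'(u_m(K)) = K`, for `K ∈ (0, K_M)`. -/
def UMinHyp (V' : ℝ → ℝ) (UM : ℝ) (umx : ℝ → ℝ) : Prop :=
  ∀ K, 0 < K → K < V' UM → UM < umx K ∧ V' (umx K) = K

/-- Characterization of `K₁ ∈ (K₀, K_M)`: `c_m(K) < c₀` for `K < K₁` and `c_m(K) > c₀`
for `K > K₁`. -/
def K1Hyp (V V' : ℝ → ℝ) (UM : ℝ) (umx : ℝ → ℝ) (K₁ : ℝ) : Prop :=
  V' 0 < K₁ ∧ K₁ < V' UM ∧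
  (∀ K, 0 < K → K < K₁ → cmf V umx K < c0v V) ∧
  cmf V umx K₁ = c0v V ∧
  (∀ K, K₁ < K → K < V' UM → c0v V < cmf V umx K)

/-- The parameter region `D₁`. -/
def D1 (V V' : ℝ → ℝ) (UM : ℝ) (uMx umx : ℝ → ℝ) : Set (ℝ × ℝ) :=
  {p | V' 0 < p.1 ∧ p.1 < V' UM ∧ c1f V umx p.1 < p.2 ∧ p.2 < cMf V uMx p.1}

/-- The parameter region `D₂`. -/
def D2 (V V' : ℝ → ℝ) (umx : ℝ → ℝ) (K₁ : ℝ) : Set (ℝ × ℝ) :=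
  {p | (V' 0 < p.1 ∧ p.1 < K₁ ∧ p.2 = c0v V) ∨
       (0 < p.1 ∧ p.1 < K₁ ∧ cmf V umx p.1 < p.2 ∧ p.2 < c0v V)}

/-- For `(K,c) ∈ D₁`: `u₁ < u₀ < u₂` are the exactly three positive zeros of `f`. -/
def ZerosD1 (V : ℝ → ℝ) (K c u1 u0 u2 : ℝ) : Prop :=
  0 < u1 ∧ u1 < u0 ∧ u0 < u2 ∧
  fTV V K c u1 = 0 ∧ fTV V K c u0 = 0 ∧ fTV V K c u2 = 0 ∧
  ∀ u, 0 < u → fTV V K c u = 0 → u = u1 ∨ u = u0 ∨ u = u2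

/-- For `(K,c) ∈ D₂`: `u₀ < u₂` are the exactly two positive zeros of `f`. -/
def ZerosD2 (V : ℝ → ℝ) (K c u0 u2 : ℝ) : Prop :=
  0 < u0 ∧ u0 < u2 ∧ fTV V K c u0 = 0 ∧ fTV V K c u2 = 0 ∧
  ∀ u, 0 < u → fTV V K c u = 0 → u = u0 ∨ u = u2

/-- Condition (HE1). -/
def HE1 (u1 u2 : ℝ) (u w : ℝ → ℝ) : Prop :=
  Tendsto u atBot (nhds u1) ∧ Tendsto u atTop (nhds u2) ∧
  Tendsto w atBot (nhds 0) ∧ Tendsto w atTop (nhds 0) ∧ ∀ z, 0 < w z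

/-- Condition (HE2). -/
def HE2 (u1 u2 : ℝ) (u w : ℝ → ℝ) : Prop :=
  Tendsto u atBot (nhds u2) ∧ Tendsto u atTop (nhds u1) ∧
  Tendsto w atBot (nhds 0) ∧ Tendsto w atTop (nhds 0) ∧ ∀ z, w z < 0

/-- Condition (HO) with level `ub`. -/
def HO (ub : ℝ) (u w : ℝ → ℝ) : Prop :=
  Tendsto u atBot (nhds ub) ∧ Tendsto u atTop (nhds ub) ∧
  Tendsto w atBot (nhds 0) ∧ Tendsto w atTop (nhds 0) ∧
  ¬ (∀ z, u z = ub ∧ w z = 0)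

/-- (TV) with parameter `μ` has a positive solution satisfying (HE1). -/
def HasHE1 (V V' κ : ℝ → ℝ) (τ K c μ u1 u2 : ℝ) : Prop :=
  ∃ u w : ℝ → ℝ, IsTVSol V V' κ τ K c μ u w ∧ (∀ z, 0 < u z) ∧ HE1 u1 u2 u w

/-- (TV) with parameter `μ` has a positive solution satisfying (HE2). -/
def HasHE2 (V V' κ : ℝ → ℝ) (τ K c μ u1 u2 : ℝ) : Prop :=
  ∃ u w : ℝ → ℝ, IsTVSol V V' κ τ K c μ u w ∧ (∀ z, 0 < u z) ∧ HE2 u1 u2 u w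

/-- (TV) with parameter `μ` has a positive solution satisfying (HO) with level `ub`. -/
def HasHO (V V' κ : ℝ → ℝ) (τ K c μ ub : ℝ) : Prop :=
  ∃ u w : ℝ → ℝ, IsTVSol V V' κ τ K c μ u w ∧ (∀ z, 0 < u z) ∧ HO ub u w

/-- Condition (H): `∫₁^∞ dρ/(ρ³ κ(ρ)) = ∞`. -/
def CondH (κ : ℝ → ℝ) : Prop :=
  ¬ IntegrableOn (fun ρ => 1 / (ρ ^ 3 * κ ρ)) (Ioi 1)

/-- Condition (C). -/
def CondC (V' κ : ℝ → ℝ) (UM K₁ K : ℝ) : Prop :=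
  (K₁ < K ∧ K < V' UM) ∨ (CondH κ ∧ V' 0 < K ∧ K ≤ K₁)

/-- Periodic solution. -/
def IsPeriodicSol (u w : ℝ → ℝ) : Prop :=
  ∃ Z, 0 < Z ∧ ∀ z, u (z + Z) = u z ∧ w (z + Z) = w z

/-- Nonconstant pair of functions. -/
def Nonconst (u w : ℝ → ℝ) : Prop := ∃ z, u z ≠ u 0 ∨ w z ≠ w 0

/-- Discriminant of the Jacobian at an equilibrium `(u,0)`. -/
def discTV (V' κ : ℝ → ℝ) (τ K u μ : ℝ) : ℝ :=
  (g2TV κ τ u) ^ 2 * (hTV V' K μ u) ^ 2 + 4 * g1TV κ τ u * fdTV V' K u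

/-- The eigenvalue `λ₊(u)`. -/
def lamP (V' κ : ℝ → ℝ) (τ K u μ : ℝ) : ℝ :=
  (g2TV κ τ u * hTV V' K μ u + Real.sqrt (discTV V' κ τ K u μ)) / 2

/-- The eigenvalue `λ₋(u)`. -/
def lamM (V' κ : ℝ → ℝ) (τ K u μ : ℝ) : ℝ :=
  (g2TV κ τ u * hTV V' K μ u - Real.sqrt (discTV V' κ τ K u μ)) / 2

/-- `Z` is the minimal period of `(u,w)`. -/
def IsMinPeriod (u w : ℝ → ℝ) (Z : ℝ) : Prop :=
  0 < Z ∧ (∀ z, u (z + Z) = u z ∧ w (z + Z) = w z) ∧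
  ∀ Z', 0 < Z' → (∀ z, u (z + Z') = u z ∧ w (z + Z') = w z) → Z ≤ Z'

/-!
A monotone front is a graph `w = W u` over `[u₁, u₂]` with `dW/du = g₁ f / W + g₂ h`. Reversing time
in a decreasing front changes the signs of the damping `g₂ f'` and of `μ`, so `μ_b` and `-μ_f` are
speed functions of one and the same bistable force, for opposite dampings. Raising `c` lowers the
force; comparing orbit graphs at a crossing point shows that every speed function is strictly
increasing, and comparing them with supersolutions shows that it is continuous. Hence `μ_b - μ_f` is
continuous and strictly increasing in `c`, and its sign is needed only near the ends of `(c₁, c_M)`.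

As `c → c_M`, the left well closes up at `u_M`, where `f'` vanishes, and `f' < 0` between `u_M` and
`u_m`; integrating the equation of `W` there makes `μ_b - μ_f` positive. When `c₁ = c_m` the lower
end is the mirror image of this under `(u, c) ↦ (-u, -c)`. When `c₁ = c₀` the left root tends to
`0`, where `∫ g₂` diverges by (H). Near `0` the force is at least `α g₂` while `W` stays bounded, so
a damping above `-η g₂` with small `η > 0` would make `W ^ 2` grow without bound; hence `μ_b` and
`-μ_f` are eventually below `-f'(0) + ε` and `f'(0) - ε` for every small `ε`.
-/

section Development

open Topology

theorem nonpos_of_deriv_neg_of_eq_zero {D D' : ℝ → ℝ} {p q : ℝ} (hD : ContinuousOn D (Icc p q))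
    (hp : D p < 0) (hD' : ∀ x ∈ Ioo p q, HasDerivAt D (D' x) x)
    (h0 : ∀ x ∈ Ioo p q, D x = 0 → D' x < 0) {x : ℝ} (hx : x ∈ Icc p q) : D x ≤ 0 := by
  rcases hx.1.eq_or_lt with rfl | hpx
  · exact hp.le
  have hneg : ∀ᶠ y in 𝓝[>] p, D y < 0 :=
    (((hD p ⟨le_rfl, hx.1.trans hx.2⟩).mono_of_mem_nhdsWithin
      (Icc_mem_nhdsGT (hpx.trans_le hx.2))).tendsto.eventually_lt_const hp)
  obtain ⟨y, hy, hpy, hyx⟩ := (hneg.and (Ioo_mem_nhdsGT hpx)).exists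
  have hsub : ∀ z ∈ Ico y x, z ∈ Ioo p q := fun z hz => ⟨hpy.trans_le hz.1, hz.2.trans_le hx.2⟩
  exact image_le_of_deriv_right_lt_deriv_boundary'
    (hD.mono (Icc_subset_Icc hpy.le hx.2)) (fun z hz => (hD' z (hsub z hz)).hasDerivWithinAt)
    hy.le continuousOn_const (fun z _ => (hasDerivAt_const z (0 : ℝ)).hasDerivWithinAt)
    (fun z hz => h0 z (hsub z hz)) ⟨hyx.le, le_rfl⟩

theorem nonpos_of_deriv_pos_of_eq_zero {D D' : ℝ → ℝ} {p q : ℝ} (hD : ContinuousOn D (Icc p q))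
    (hq : D q < 0) (hD' : ∀ x ∈ Ioo p q, HasDerivAt D (D' x) x)
    (h0 : ∀ x ∈ Ioo p q, D x = 0 → 0 < D' x) {x : ℝ} (hx : x ∈ Icc p q) : D x ≤ 0 := by
  have hreflect : D (- -x) ≤ 0 := nonpos_of_deriv_neg_of_eq_zero (D := fun v => D (-v))
    (D' := fun v => -D' (-v)) (p := -q) (q := -p)
    (hD.comp continuousOn_neg fun v hv => neg_mem_Icc_iff.2 hv) (by simpa only [neg_neg] using hq)
    (fun v hv => ((hD' (-v) (neg_mem_Ioo_iff.2 hv)).comp v (hasDerivAt_neg v)).congr_deriv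
      (mul_neg_one _))
    (fun v hv hv0 => neg_neg_of_pos (h0 (-v) (neg_mem_Ioo_iff.2 hv) hv0))
    (neg_mem_Icc_iff.2 (by simpa only [neg_neg] using hx))
  simpa only [neg_neg] using hreflect

theorem range_eq_Ioo_of_tendsto {u : ℝ → ℝ} {a b : ℝ} (hu : Continuous u) (hmono : StrictMono u)
    (ha : Tendsto u atBot (𝓝 a)) (hb : Tendsto u atTop (𝓝 b)) : range u = Ioo a b := by
  refine subset_antisymm (range_subset_iff.2 fun z => ⟨?_, ?_⟩) fun y hy => ?_
  · exact (hmono.monotone.le_of_tendsto ha (z - 1)).trans_lt (hmono (sub_one_lt z))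
  · exact (hmono (lt_add_one z)).trans_le (hmono.monotone.ge_of_tendsto hb (z + 1))
  · obtain ⟨z₁, hz₁⟩ := (ha.eventually_lt_const hy.1).exists
    obtain ⟨z₂, hz₂⟩ := (hb.eventually_const_lt hy.2).exists
    exact mem_range_of_exists_le_of_exists_ge hu ⟨z₁, hz₁.le⟩ ⟨z₂, hz₂.le⟩

/-- `W` is the graph over `[a, b]` of a trajectory of the planar system
`u' = w, w' = A u + B u * w` that runs in the open upper half plane from the point `(a, 0)` to the
point `(b, 0)`: it solves `dw/du = A u / w + B u`. -/
structure IsOrbitGraph (A B : ℝ → ℝ) (a b : ℝ) (W : ℝ → ℝ) : Prop where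
  continuousOn : ContinuousOn W (Icc a b)
  apply_left : W a = 0
  apply_right : W b = 0
  pos : ∀ u ∈ Ioo a b, 0 < W u
  hasDerivAt : ∀ u ∈ Ioo a b, HasDerivAt W (A u / W u + B u) u

namespace IsOrbitGraph

variable {A B A' B' W X : ℝ → ℝ} {a b a' b' p q : ℝ}

theorem reflect (h : IsOrbitGraph A B a b W) :
    IsOrbitGraph (fun v => -A (-v)) (fun v => -B (-v)) (-b) (-a) (fun v => W (-v)) where
  continuousOn := h.continuousOn.comp continuousOn_neg fun _ hv => neg_mem_Icc_iff.2 hv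
  apply_left := by rw [neg_neg, h.apply_right]
  apply_right := by rw [neg_neg, h.apply_left]
  pos v hv := h.pos (-v) (neg_mem_Ioo_iff.2 hv)
  hasDerivAt v hv := ((h.hasDerivAt (-v) (neg_mem_Ioo_iff.2 hv)).comp v
    (hasDerivAt_neg v)).congr_deriv (by ring)

theorem not_lt_of_lt (hW : IsOrbitGraph A B a b W) (hX : IsOrbitGraph A' B' a' b' X)
    (ha : a < a') (hab : a' < b) (hA : ∀ u ∈ Ioo a' b, A' u < A u)
    (hB : ∀ u ∈ Ioo a' b, B' u ≤ B u) : ¬ b < b' := fun hb => by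
  have hW' : ∀ u ∈ Ioo a' b, u ∈ Ioo a b := fun u hu => ⟨ha.trans hu.1, hu.2⟩
  have hX' : ∀ u ∈ Ioo a' b, u ∈ Ioo a' b' := fun u hu => ⟨hu.1, hu.2.trans hb⟩
  have hle : X b - W b ≤ 0 := by
    refine nonpos_of_deriv_neg_of_eq_zero (D := fun u => X u - W u)
      ((hX.continuousOn.mono (Icc_subset_Icc le_rfl hb.le)).sub
        (hW.continuousOn.mono (Icc_subset_Icc ha.le le_rfl)))
      (by simpa only [hX.apply_left, zero_sub, neg_neg_iff_pos] using hW.pos a' ⟨ha, hab⟩)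
      (fun u hu => (hX.hasDerivAt u (hX' u hu)).sub (hW.hasDerivAt u (hW' u hu)))
      (fun u hu h0 => ?_) ⟨hab.le, le_rfl⟩
    have hdiv := div_lt_div_of_pos_right (hA u hu) (hW.pos u (hW' u hu))
    rw [sub_eq_zero.1 h0]
    linarith [hB u hu]
  linarith [hX.pos b ⟨hab, hb⟩, hW.apply_right]

/-- Along the line `X - W = η (u - m)` the sign condition makes the nonlinear term
`A' (1 / X - 1 / W)` push the difference `X - W` upwards. -/
theorem mul_sub_le_sub {m η : ℝ} (hW : IsOrbitGraph A B a b W) (hX : IsOrbitGraph A' B' a' b' X)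
    (hap : a < p) (hap' : a' < p) (hpq : p ≤ q) (hqb : q < b) (hqb' : q < b') (hη : 0 ≤ η)
    (hsign : ∀ u ∈ Ioo p q, 0 ≤ A' u * (m - u))
    (hgap : ∀ u ∈ Ioo p q, η < (A' u - A u) / W u + (B' u - B u))
    (hp : W p - X p < η * (m - p)) : η * (q - m) ≤ X q - W q := by
  have hW' : Ioo p q ⊆ Ioo a b := Ioo_subset_Ioo hap.le hqb.le
  have hX' : Ioo p q ⊆ Ioo a' b' := Ioo_subset_Ioo hap'.le hqb'.le
  have hle : W q - X q + η * (q - m) ≤ 0 := by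
    refine nonpos_of_deriv_neg_of_eq_zero (D := fun u => W u - X u + η * (u - m))
      (((hW.continuousOn.mono (Icc_subset_Icc hap.le hqb.le)).sub
        (hX.continuousOn.mono (Icc_subset_Icc hap'.le hqb'.le))).add (by fun_prop))
      (by linarith)
      (fun u hu => ((hW.hasDerivAt u (hW' hu)).sub (hX.hasDerivAt u (hX' hu))).add
        (((hasDerivAt_id u).sub_const m).const_mul η))
      (fun u hu h0 => ?_) ⟨hpq, le_rfl⟩
    have hWu := hW.pos u (hW' hu)
    have hXu := hX.pos u (hX' hu)
    have hnonlinear : 0 ≤ A' u * (1 / X u - 1 / W u) := by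
      have hdiff : A' u * (1 / X u - 1 / W u) = η * (A' u * (m - u)) / (X u * W u) := by
        field_simp
        linear_combination A' u * h0
      rw [hdiff]
      exact div_nonneg (mul_nonneg hη (hsign u hu)) (mul_pos hXu hWu).le
    have hsplit : A' u / X u - A u / W u
        = A' u * (1 / X u - 1 / W u) + (A' u - A u) / W u := by ring
    linarith [hgap u hu]
  linarith

theorem le_add_mul_sub_left {α β σ Q : ℝ} (hW : IsOrbitGraph A B a b W) (hp : p ∈ Icc a b)
    (hα : 0 ≤ α) (hσ : 0 < σ) (hQ : 0 ≤ Q) (hA : ∀ u ∈ Ioo a p, A u ≤ α)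
    (hB : ∀ u ∈ Ioo a p, B u ≤ β) (hαβ : α / σ + β < Q) : W p ≤ σ + Q * (p - a) := by
  have hsub : Ioo a p ⊆ Ioo a b := Ioo_subset_Ioo_right hp.2
  have hle : W p - (σ + Q * (p - a)) ≤ 0 := by
    refine nonpos_of_deriv_neg_of_eq_zero (D := fun u => W u - (σ + Q * (u - a)))
      ((hW.continuousOn.mono (Icc_subset_Icc_right hp.2)).sub (by fun_prop))
      (by linarith [hW.apply_left])
      (fun u hu => (hW.hasDerivAt u (hsub hu)).sub
        ((((hasDerivAt_id u).sub_const a).const_mul Q).const_add σ))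
      (fun u hu h0 => ?_) ⟨hp.1, le_rfl⟩
    have hσW : σ ≤ W u := by linarith [mul_nonneg hQ (sub_nonneg.2 hu.1.le)]
    have hdiv : A u / W u ≤ α / σ := by
      gcongr
      exact hA u hu
    linarith [hB u hu]
  linarith

theorem le_add_mul_sub_right {α β σ Q : ℝ} (hW : IsOrbitGraph A B a b W) (hp : p ∈ Icc a b)
    (hα : 0 ≤ α) (hσ : 0 < σ) (hQ : 0 ≤ Q) (hA : ∀ u ∈ Ioo p b, -α ≤ A u)
    (hB : ∀ u ∈ Ioo p b, -β ≤ B u) (hαβ : α / σ + β < Q) : W p ≤ σ + Q * (b - p) := by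
  have hmem : ∀ v ∈ Ioo (-b) (-p), -v ∈ Ioo p b := fun v hv => neg_mem_Ioo_iff.2 hv
  have hreflect := hW.reflect.le_add_mul_sub_left (p := -p) ⟨neg_le_neg hp.2, neg_le_neg hp.1⟩
    hα hσ hQ (fun v hv => neg_le.1 (hA _ (hmem v hv))) (fun v hv => neg_le.1 (hB _ (hmem v hv))) hαβ
  simpa only [neg_neg, neg_sub_neg] using hreflect

section Energy

variable {g : ℝ → ℝ} {y α η M : ℝ}

theorem le_of_le_mul (hW : IsOrbitGraph A B a b W) (hay : a ≤ y) (hyp : y < p) (hpb : p < b)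
    (hα : 0 < α) (hηM : η * M ≤ α / 2) (hg : ∀ u ∈ Ioo y p, 0 < g u)
    (hA : ∀ u ∈ Ioo y p, α * g u ≤ A u) (hB : ∀ u ∈ Ioo y p, -(η * g u) ≤ B u)
    (hWp : W p < M) {u : ℝ} (hu : u ∈ Icc y p) : W u ≤ M := by
  have hM : 0 < M := (hW.pos p ⟨hay.trans_lt hyp, hpb⟩).trans hWp
  have hsub : Ioo y p ⊆ Ioo a b := Ioo_subset_Ioo hay hpb.le
  refine sub_nonpos.1 (nonpos_of_deriv_pos_of_eq_zero (D := fun u => W u - M)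
    ((hW.continuousOn.mono (Icc_subset_Icc hay hpb.le)).sub continuousOn_const)
    (sub_neg.2 hWp) (fun v hv => (hW.hasDerivAt v (hsub hv)).sub_const M)
    (fun v hv hv0 => ?_) hu)
  have hdiv : α * g v / M ≤ A v / W v := by
    rw [sub_eq_zero.1 hv0]
    exact div_le_div_of_nonneg_right (hA v hv) hM.le
  have hdom : 0 < α * g v / M - η * g v := by
    rw [show α * g v / M - η * g v = (α - η * M) * g v / M by field_simp]
    exact div_pos (mul_pos (by linarith) (hg v hv)) hM
  linarith [hB v hv]

theorem integral_le_sq_div (hW : IsOrbitGraph A B a b W) (hay : a ≤ y) (hyp : y < p) (hpb : p < b)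
    (hα : 0 < α) (hη : 0 ≤ η) (hηM : η * M ≤ α / 2) (hgc : ContinuousOn g (Icc y p))
    (hg : ∀ u ∈ Ioo y p, 0 < g u) (hA : ∀ u ∈ Ioo y p, α * g u ≤ A u)
    (hB : ∀ u ∈ Ioo y p, -(η * g u) ≤ B u) (hWp : W p < M) :
    ∫ u in y..p, g u ≤ M ^ 2 / α := by
  have hsub : Icc y p ⊆ Icc a b := Icc_subset_Icc hay hpb.le
  have hWp0 : 0 < W p := hW.pos p ⟨hay.trans_lt hyp, hpb⟩
  have henergy : ∫ u in y..p, g u ≤ W p ^ 2 / α - W y ^ 2 / α := by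
    refine intervalIntegral.integral_le_sub_of_hasDeriv_right_of_le hyp.le
      (((hW.continuousOn.mono hsub).pow 2).div_const α)
      (fun u hu => (((hW.hasDerivAt u ⟨hay.trans_lt hu.1, hu.2.trans hpb⟩).pow 2).div_const
        α).hasDerivWithinAt) (hgc.integrableOn_compact isCompact_Icc) (fun u hu => ?_)
    have hWu := hW.pos u ⟨hay.trans_lt hu.1, hu.2.trans hpb⟩
    have hWM := hW.le_of_le_mul hay hyp hpb hα hηM hg hA hB hWp (Ioo_subset_Icc_self hu)
    have hBW : -(η * M * g u) ≤ B u * W u := by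
      have hηg : 0 ≤ η * g u := mul_nonneg hη (hg u hu).le
      nlinarith [mul_le_mul_of_nonneg_right (hB u hu) hWu.le, mul_le_mul_of_nonneg_left hWM hηg]
    have hrate : (2 : ℕ) * W u ^ (2 - 1) * (A u / W u + B u) = 2 * (A u + B u * W u) := by
      rw [Nat.cast_ofNat, Nat.add_one_sub_one, pow_one]
      field_simp
    rw [le_div_iff₀ hα, hrate]
    linarith [hA u hu, mul_le_mul_of_nonneg_right hηM (hg u hu).le]
  have hWM2 : W p ^ 2 / α ≤ M ^ 2 / α := by gcongr
  linarith [div_nonneg (sq_nonneg (W y)) hα.le]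

end Energy

end IsOrbitGraph

section OfTrajectory

variable {u w : ℝ → ℝ} {a b : ℝ}

theorem continuousAt_extend (hu : IsOpenEmbedding u) {z : ℝ} (hw : ContinuousAt w z) :
    ContinuousAt (Function.extend u w 0) (u z) := by
  rwa [← hu.continuousAt_iff, Function.extend_comp hu.injective]

theorem hasDerivAt_extend {u' w' z : ℝ} (hopen : IsOpenEmbedding u) (hu : HasDerivAt u u' z)
    (hu' : u' ≠ 0) (hw : HasDerivAt w w' z) :
    HasDerivAt (Function.extend u w 0) (w' / u') (u z) := by
  have hext : ∀ (v : ℝ → ℝ) (s : ℝ), Function.extend u v 0 (u s) = v s := fun v =>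
    hopen.injective.extend_apply v 0
  have hinv : HasDerivAt (Function.extend u id 0) u'⁻¹ (u z) := by
    refine HasDerivAt.of_local_left_inverse (f := u) (continuousAt_extend hopen continuousAt_id)
      (by rwa [hext]) hu' ?_
    filter_upwards [hopen.isOpen_range.mem_nhds (mem_range_self z)]
    rintro _ ⟨s, rfl⟩
    rw [hext, id]
  refine (HasDerivAt.comp (h₂ := w) (u z) (by rwa [hext]) hinv).congr_of_eventuallyEq ?_
  filter_upwards [hopen.isOpen_range.mem_nhds (mem_range_self z)]
  rintro _ ⟨s, rfl⟩
  rw [Function.comp_apply, hext, hext, id]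

theorem exists_orderIso_Ioo (hu : Continuous u) (hmono : StrictMono u)
    (ha : Tendsto u atBot (𝓝 a)) (hb : Tendsto u atTop (𝓝 b)) :
    ∃ e : ℝ ≃o Ioo a b, u = (↑) ∘ e :=
  ⟨(StrictMono.orderIso u hmono).trans
    (OrderIso.setCongr _ _ (range_eq_Ioo_of_tendsto hu hmono ha hb)), rfl⟩

theorem continuousOn_extend (e : ℝ ≃o Ioo a b) (hu : u = (↑) ∘ e) (hw : Continuous w)
    (hwa : Tendsto w atBot (𝓝 0)) (hwb : Tendsto w atTop (𝓝 0)) :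
    ContinuousOn (Function.extend u w 0) (Icc a b) := by
  have hab : a < b := nonempty_Ioo.1 ⟨e 0, (e 0).2⟩
  have hopen : IsOpenEmbedding u := hu ▸
    isOpen_Ioo.isOpenEmbedding_subtypeVal.comp e.toHomeomorph.isOpenEmbedding
  have hout : ∀ v ∉ Ioo a b, Function.extend u w 0 v = 0 := fun v hv =>
    Function.extend_apply' _ _ _ fun ⟨z, hz⟩ => hv (hz ▸ hu ▸ (e z).2)
  intro v hv
  rcases eq_endpoints_or_mem_Ioo_of_mem_Icc hv with rfl | rfl | hv
  · have hmap : map u atBot = 𝓝[>] v := by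
      rw [hu, ← map_map, e.map_atBot, map_coe_Ioo_atBot hab]
    rwa [continuousWithinAt_Icc_iff_Ici hab, ← continuousWithinAt_Ioi_iff_Ici, ContinuousWithinAt,
      hout v left_notMem_Ioo, ← hmap, tendsto_map'_iff, Function.extend_comp hopen.injective]
  · have hmap : map u atTop = 𝓝[<] v := by
      rw [hu, ← map_map, e.map_atTop, map_coe_Ioo_atTop hab]
    rwa [continuousWithinAt_Icc_iff_Iic hab, ← continuousWithinAt_Iio_iff_Iic, ContinuousWithinAt,
      hout v right_notMem_Ioo, ← hmap, tendsto_map'_iff, Function.extend_comp hopen.injective]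
  · have huz : u (e.symm ⟨v, hv⟩) = v := by rw [hu, Function.comp_apply, e.apply_symm_apply]
    exact huz ▸ (continuousAt_extend hopen hw.continuousAt).continuousWithinAt

theorem exists_isOrbitGraph {A B : ℝ → ℝ} (hu : ∀ z, HasDerivAt u (w z) z)
    (hw : ∀ z, HasDerivAt w (A (u z) + B (u z) * w z) z) (hpos : ∀ z, 0 < w z)
    (hua : Tendsto u atBot (𝓝 a)) (hub : Tendsto u atTop (𝓝 b)) (hwa : Tendsto w atBot (𝓝 0))
    (hwb : Tendsto w atTop (𝓝 0)) : ∃ W, IsOrbitGraph A B a b W := by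
  have hmono : StrictMono u := strictMono_of_hasDerivAt_pos hu hpos
  obtain ⟨e, he⟩ := exists_orderIso_Ioo (continuous_iff_continuousAt.2 fun z => (hu z).continuousAt)
    hmono hua hub
  have hopen : IsOpenEmbedding u := he ▸
    isOpen_Ioo.isOpenEmbedding_subtypeVal.comp e.toHomeomorph.isOpenEmbedding
  have hout : ∀ v ∉ Ioo a b, Function.extend u w 0 v = 0 := fun v hv =>
    Function.extend_apply' _ _ _ fun ⟨z, hz⟩ => hv (hz ▸ he ▸ (e z).2)
  have hsurj : ∀ v ∈ Ioo a b, ∃ z, u z = v := fun v hv =>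
    ⟨e.symm ⟨v, hv⟩, by rw [he, Function.comp_apply, e.apply_symm_apply]⟩
  refine ⟨Function.extend u w 0, continuousOn_extend e he
    (continuous_iff_continuousAt.2 fun z => (hw z).continuousAt) hwa hwb,
    hout a left_notMem_Ioo, hout b right_notMem_Ioo, fun v hv => ?_, fun v hv => ?_⟩ <;>
    obtain ⟨z, rfl⟩ := hsurj v hv <;> rw [hmono.injective.extend_apply]
  · exact hpos z
  · refine (hasDerivAt_extend hopen (hu z) (hpos z).ne' (hw z)).congr_deriv ?_
    rw [add_div, mul_div_cancel_right₀ _ (hpos z).ne']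

end OfTrajectory

/-- A family of bistable forces `u ↦ g₁ u * (F u - c)` with damping coefficient `g₂`, for levels
`c` in `(cmin, cmax)`: `F` increases up to `peak`, decreases down to `valley`, increases again, and
takes the value `c` at the three points `left c < mid c < right c`. The coefficients need only make
sense on the open interval `dom`; for the traffic model this is `(0, ∞)`. -/
structure BistableField where
  (dom : Set ℝ) (g₁ g₂ F : ℝ → ℝ) (cmin cmax peak valley : ℝ) (left mid right : ℝ → ℝ)
  isOpen_dom : IsOpen dom
  ordConnected_dom : dom.OrdConnected
  continuousOn_g₁ : ContinuousOn g₁ dom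
  continuousOn_g₂ : ContinuousOn g₂ dom
  continuousOn_F : ContinuousOn F dom
  g₁_pos : ∀ u ∈ dom, 0 < g₁ u
  g₂_pos : ∀ u ∈ dom, 0 < g₂ u
  strictMonoOn_Iic : StrictMonoOn F (dom ∩ Iic peak)
  strictAntiOn_Icc : StrictAntiOn F (dom ∩ Icc peak valley)
  strictMonoOn_Ici : StrictMonoOn F (dom ∩ Ici valley)
  cmin_lt_cmax : cmin < cmax
  left_mem_dom : ∀ c ∈ Ioo cmin cmax, left c ∈ dom
  right_mem_dom : ∀ c ∈ Ioo cmin cmax, right c ∈ dom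
  left_lt_mid : ∀ c ∈ Ioo cmin cmax, left c < mid c
  mid_lt_right : ∀ c ∈ Ioo cmin cmax, mid c < right c
  F_left : ∀ c ∈ Ioo cmin cmax, F (left c) = c
  F_mid : ∀ c ∈ Ioo cmin cmax, F (mid c) = c
  F_right : ∀ c ∈ Ioo cmin cmax, F (right c) = c

theorem strictMonoOn_neg_comp_neg {F : ℝ → ℝ} {s : Set ℝ} (h : StrictMonoOn F s) :
    StrictMonoOn (fun v => -F (-v)) (Neg.neg ⁻¹' s) :=
  fun _ hv _ hw hvw => neg_lt_neg (h hw hv (neg_lt_neg hvw))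

theorem strictAntiOn_neg_comp_neg {F : ℝ → ℝ} {s : Set ℝ} (h : StrictAntiOn F s) :
    StrictAntiOn (fun v => -F (-v)) (Neg.neg ⁻¹' s) :=
  fun _ hv _ hw hvw => neg_lt_neg (h hw hv (neg_lt_neg hvw))

theorem continuousOn_comp_neg {f : ℝ → ℝ} {s : Set ℝ} (h : ContinuousOn f s) :
    ContinuousOn (fun v => f (-v)) (Neg.neg ⁻¹' s) :=
  h.comp continuousOn_neg fun _ hv => hv

namespace BistableField

/-- The field seen from the other side, under `(u, c) ↦ (-u, -c)`. It exchanges the two ends of the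
domain and the two ends of the range of levels. -/
@[simps]
def reflect (P : BistableField) : BistableField where
  dom := Neg.neg ⁻¹' P.dom
  g₁ v := P.g₁ (-v)
  g₂ v := P.g₂ (-v)
  F v := -P.F (-v)
  cmin := -P.cmax
  cmax := -P.cmin
  peak := -P.valley
  valley := -P.peak
  left c := -P.right (-c)
  mid c := -P.mid (-c)
  right c := -P.left (-c)
  isOpen_dom := P.isOpen_dom.preimage continuous_neg
  ordConnected_dom := P.ordConnected_dom.preimage_anti fun _ _ => neg_le_neg
  continuousOn_g₁ := continuousOn_comp_neg P.continuousOn_g₁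
  continuousOn_g₂ := continuousOn_comp_neg P.continuousOn_g₂
  continuousOn_F := (continuousOn_comp_neg P.continuousOn_F).neg
  g₁_pos v := P.g₁_pos (-v)
  g₂_pos v := P.g₂_pos (-v)
  strictMonoOn_Iic := (strictMonoOn_neg_comp_neg P.strictMonoOn_Ici).mono
    fun _ hv => ⟨hv.1, mem_Ici.2 (le_neg.1 hv.2)⟩
  strictAntiOn_Icc := (strictAntiOn_neg_comp_neg P.strictAntiOn_Icc).mono
    fun _ hv => ⟨hv.1, neg_mem_Icc_iff.2 hv.2⟩
  strictMonoOn_Ici := (strictMonoOn_neg_comp_neg P.strictMonoOn_Iic).mono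
    fun _ hv => ⟨hv.1, mem_Iic.2 (neg_le.1 hv.2)⟩
  cmin_lt_cmax := neg_lt_neg P.cmin_lt_cmax
  left_mem_dom c hc := by
    simpa only [mem_preimage, neg_neg] using P.right_mem_dom (-c) (neg_mem_Ioo_iff.2 hc)
  right_mem_dom c hc := by
    simpa only [mem_preimage, neg_neg] using P.left_mem_dom (-c) (neg_mem_Ioo_iff.2 hc)
  left_lt_mid c hc := neg_lt_neg (P.mid_lt_right (-c) (neg_mem_Ioo_iff.2 hc))
  mid_lt_right c hc := neg_lt_neg (P.left_lt_mid (-c) (neg_mem_Ioo_iff.2 hc))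
  F_left c hc := by rw [neg_neg, P.F_right (-c) (neg_mem_Ioo_iff.2 hc), neg_neg]
  F_mid c hc := by rw [neg_neg, P.F_mid (-c) (neg_mem_Ioo_iff.2 hc), neg_neg]
  F_right c hc := by rw [neg_neg, P.F_left (-c) (neg_mem_Ioo_iff.2 hc), neg_neg]

variable (P : BistableField)

/-- The levels `c` at which the force has three zeros. -/
def levels : Set ℝ := Ioo P.cmin P.cmax

/-- The bistable force `g₁ (F - c)` at level `c`. -/
def force (c u : ℝ) : ℝ := P.g₁ u * (P.F u - c)

variable {P} {c c' u : ℝ}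

theorem neg_mem_levels (hc : c ∈ P.levels) : -c ∈ P.reflect.levels :=
  ⟨neg_lt_neg hc.2, neg_lt_neg hc.1⟩

theorem reflect_force (c v : ℝ) : P.reflect.force c v = -P.force (-c) (-v) := by
  simp only [force, reflect_g₁, reflect_F]
  ring

theorem levels_nonempty (P : BistableField) : P.levels.Nonempty := nonempty_Ioo.2 P.cmin_lt_cmax

section Order

theorem left_lt_right (hc : c ∈ P.levels) : P.left c < P.right c :=
  (P.left_lt_mid c hc).trans (P.mid_lt_right c hc)

theorem Icc_subset_dom (hc : c ∈ P.levels) : Icc (P.left c) (P.right c) ⊆ P.dom :=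
  P.ordConnected_dom.out (P.left_mem_dom c hc) (P.right_mem_dom c hc)

theorem mid_mem_dom (hc : c ∈ P.levels) : P.mid c ∈ P.dom :=
  Icc_subset_dom hc ⟨(P.left_lt_mid c hc).le, (P.mid_lt_right c hc).le⟩

theorem left_lt_peak (hc : c ∈ P.levels) : P.left c < P.peak := by
  by_contra! hpeak
  have hpeak' := hpeak.trans (P.left_lt_mid c hc).le
  rcases le_or_gt (P.mid c) P.valley with hv | hv
  · exact ((P.F_left c hc).trans (P.F_mid c hc).symm).not_gt <| P.strictAntiOn_Icc
      ⟨P.left_mem_dom c hc, hpeak, (P.left_lt_mid c hc).le.trans hv⟩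
      ⟨mid_mem_dom hc, hpeak', hv⟩ (P.left_lt_mid c hc)
  · exact ((P.F_right c hc).trans (P.F_mid c hc).symm).not_gt <| P.strictMonoOn_Ici
      ⟨mid_mem_dom hc, hv.le⟩
      ⟨P.right_mem_dom c hc, hv.le.trans (P.mid_lt_right c hc).le⟩ (P.mid_lt_right c hc)

theorem peak_lt_mid (hc : c ∈ P.levels) : P.peak < P.mid c := by
  by_contra! hpeak
  exact ((P.F_left c hc).trans (P.F_mid c hc).symm).not_lt <| P.strictMonoOn_Iic
    ⟨P.left_mem_dom c hc, (left_lt_peak hc).le⟩ ⟨mid_mem_dom hc, hpeak⟩ (P.left_lt_mid c hc)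

theorem valley_lt_right (hc : c ∈ P.levels) : P.valley < P.right c := by
  simpa only [reflect_left, reflect_peak, neg_neg, neg_lt_neg_iff]
    using left_lt_peak (neg_mem_levels hc)

theorem mid_lt_valley (hc : c ∈ P.levels) : P.mid c < P.valley := by
  simpa only [reflect_mid, reflect_peak, neg_neg, neg_lt_neg_iff]
    using peak_lt_mid (neg_mem_levels hc)

theorem Icc_peak_valley_subset_dom (P : BistableField) : Icc P.peak P.valley ⊆ P.dom := by
  obtain ⟨c, hc⟩ := P.levels_nonempty
  exact (Icc_subset_Icc (left_lt_peak hc).le (valley_lt_right hc).le).trans (Icc_subset_dom hc)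

theorem peak_lt_valley (P : BistableField) : P.peak < P.valley := by
  obtain ⟨c, hc⟩ := P.levels_nonempty
  exact (peak_lt_mid hc).trans (mid_lt_valley hc)

theorem force_pos (hc : c ∈ P.levels) (hu : u ∈ Ioo (P.left c) (P.mid c)) : 0 < P.force c u := by
  have hdom : u ∈ P.dom := Icc_subset_dom hc ⟨hu.1.le, (hu.2.trans (P.mid_lt_right c hc)).le⟩
  refine mul_pos (P.g₁_pos u hdom) (sub_pos.2 ?_)
  rcases le_or_gt u P.peak with hp | hp
  · exact (P.F_left c hc).symm.trans_lt <| P.strictMonoOn_Iic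
      ⟨P.left_mem_dom c hc, (left_lt_peak hc).le⟩ ⟨hdom, hp⟩ hu.1
  · exact (P.F_mid c hc).symm.trans_lt <| P.strictAntiOn_Icc
      ⟨hdom, hp.le, (hu.2.trans (mid_lt_valley hc)).le⟩
      ⟨mid_mem_dom hc, (peak_lt_mid hc).le, (mid_lt_valley hc).le⟩ hu.2

theorem force_neg (hc : c ∈ P.levels) (hu : u ∈ Ioo (P.mid c) (P.right c)) : P.force c u < 0 := by
  have hpos : 0 < P.reflect.force (-c) (-u) := force_pos (neg_mem_levels hc) (by
    simpa only [reflect_left, reflect_mid, neg_neg, neg_mem_Ioo_iff] using hu)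
  simpa only [reflect_force, neg_neg, neg_pos] using hpos

theorem force_strictAnti (hu : u ∈ P.dom) : StrictAnti fun c => P.force c u :=
  fun _ _ hcc' => mul_lt_mul_of_pos_left (sub_lt_sub_left hcc' _) (P.g₁_pos u hu)

theorem continuousOn_force (c : ℝ) : ContinuousOn (P.force c) P.dom :=
  P.continuousOn_g₁.mul (P.continuousOn_F.sub continuousOn_const)

end Order

section Roots

theorem left_lt_of_lt_F (hc : c ∈ P.levels) (hu : u ∈ P.dom) (hup : u ≤ P.peak)
    (h : c < P.F u) : P.left c < u :=
  (P.strictMonoOn_Iic.lt_iff_lt ⟨P.left_mem_dom c hc, (left_lt_peak hc).le⟩ ⟨hu, hup⟩).1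
    (by rwa [P.F_left c hc])

theorem lt_left_of_F_lt (hc : c ∈ P.levels) (hu : u ∈ P.dom) (hup : u ≤ P.peak)
    (h : P.F u < c) : u < P.left c :=
  (P.strictMonoOn_Iic.lt_iff_lt ⟨hu, hup⟩ ⟨P.left_mem_dom c hc, (left_lt_peak hc).le⟩).1
    (by rwa [P.F_left c hc])

theorem right_lt_of_lt_F (hc : c ∈ P.levels) (hu : u ∈ P.dom) (hvu : P.valley ≤ u)
    (h : c < P.F u) : P.right c < u :=
  (P.strictMonoOn_Ici.lt_iff_lt ⟨P.right_mem_dom c hc, (valley_lt_right hc).le⟩ ⟨hu, hvu⟩).1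
    (by rwa [P.F_right c hc])

theorem mid_lt_of_F_lt (hc : c ∈ P.levels) (hu : u ∈ P.dom) (hu' : u ∈ Icc P.peak P.valley)
    (h : P.F u < c) : P.mid c < u :=
  (P.strictAntiOn_Icc.lt_iff_gt ⟨hu, hu'⟩
    ⟨mid_mem_dom hc, (peak_lt_mid hc).le, (mid_lt_valley hc).le⟩).1 (by rwa [P.F_mid c hc])

theorem strictMonoOn_left (P : BistableField) : StrictMonoOn P.left P.levels :=
  fun c hc c' hc' h => left_lt_of_lt_F hc (P.left_mem_dom c' hc') (left_lt_peak hc').le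
    (by rwa [P.F_left c' hc'])

theorem strictMonoOn_right (P : BistableField) : StrictMonoOn P.right P.levels :=
  fun c hc c' hc' h => right_lt_of_lt_F hc (P.right_mem_dom c' hc') (valley_lt_right hc').le
    (by rwa [P.F_right c' hc'])

theorem levels_mem_nhds (hc : c ∈ P.levels) : P.levels ∈ 𝓝 c := Ioo_mem_nhds hc.1 hc.2

theorem eventually_left_lt (hc : c ∈ P.levels) (hu : P.left c < u) :
    ∀ᶠ c' in 𝓝 c, P.left c' < u := by
  obtain ⟨v, hv, hvmin⟩ := exists_between (lt_min hu (left_lt_peak hc))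
  have hvpeak := (hvmin.trans_le (min_le_right _ _)).le
  have hvdom := P.ordConnected_dom.out (P.left_mem_dom c hc) (mid_mem_dom hc)
    ⟨hv.le, hvpeak.trans (peak_lt_mid hc).le⟩
  have hFv : c < P.F v := (P.F_left c hc).symm.trans_lt <|
    P.strictMonoOn_Iic ⟨P.left_mem_dom c hc, (left_lt_peak hc).le⟩ ⟨hvdom, hvpeak⟩ hv
  filter_upwards [levels_mem_nhds hc, eventually_lt_nhds hFv] with c' hc' hlt
  exact (left_lt_of_lt_F hc' hvdom hvpeak hlt).trans (hvmin.trans_le (min_le_left _ _))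

theorem eventually_right_lt (hc : c ∈ P.levels) (hu : u ∈ P.dom) (hcu : P.right c < u) :
    ∀ᶠ c' in 𝓝 c, P.right c' < u := by
  have hvu := (valley_lt_right hc).le.trans hcu.le
  have hFu : c < P.F u := (P.F_right c hc).symm.trans_lt <|
    P.strictMonoOn_Ici ⟨P.right_mem_dom c hc, (valley_lt_right hc).le⟩ ⟨hu, hvu⟩ hcu
  filter_upwards [levels_mem_nhds hc, eventually_lt_nhds hFu] with c' hc' hlt
  exact right_lt_of_lt_F hc' hu hvu hlt

theorem levels_mem_nhdsLT_cmax (P : BistableField) : P.levels ∈ 𝓝[<] P.cmax :=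
  Ioo_mem_nhdsLT P.cmin_lt_cmax

theorem levels_mem_nhdsGT_cmin (P : BistableField) : P.levels ∈ 𝓝[>] P.cmin :=
  Ioo_mem_nhdsGT P.cmin_lt_cmax

theorem peak_mem_dom (P : BistableField) : P.peak ∈ P.dom :=
  P.Icc_peak_valley_subset_dom ⟨le_rfl, P.peak_lt_valley.le⟩

theorem tendsto_left_cmax (hF : P.F P.peak = P.cmax) :
    Tendsto P.left (𝓝[<] P.cmax) (𝓝[<] P.peak) := by
  have hlt : ∀ᶠ c in 𝓝[<] P.cmax, P.left c ∈ Iio P.peak :=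
    mem_of_superset P.levels_mem_nhdsLT_cmax fun c hc => left_lt_peak hc
  refine tendsto_nhdsWithin_iff.2 ⟨tendsto_order.2 ⟨fun u hu => ?_, fun u hu => ?_⟩, hlt⟩
  · obtain ⟨c₀, hc₀⟩ := P.levels_nonempty
    obtain ⟨v, hv, hvpeak⟩ := exists_between (max_lt hu (left_lt_peak hc₀))
    have hvdom : v ∈ P.dom := P.ordConnected_dom.out (P.left_mem_dom c₀ hc₀) P.peak_mem_dom
      ⟨(le_max_right _ _).trans hv.le, hvpeak.le⟩
    have hFv : P.F v < P.cmax :=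
      hF ▸ P.strictMonoOn_Iic ⟨hvdom, hvpeak.le⟩ ⟨P.peak_mem_dom, self_mem_Iic⟩ hvpeak
    filter_upwards [P.levels_mem_nhdsLT_cmax, Ioo_mem_nhdsLT hFv] with c hc hlt
    exact (le_max_left _ _).trans_lt (hv.trans (lt_left_of_F_lt hc hvdom hvpeak.le hlt.1))
  · exact hlt.mono fun c hc => hc.trans hu

theorem tendsto_mid_cmax (hF : P.F P.peak = P.cmax) :
    Tendsto P.mid (𝓝[<] P.cmax) (𝓝[>] P.peak) := by
  have hgt : ∀ᶠ c in 𝓝[<] P.cmax, P.mid c ∈ Ioi P.peak :=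
    mem_of_superset P.levels_mem_nhdsLT_cmax fun c hc => peak_lt_mid hc
  refine tendsto_nhdsWithin_iff.2 ⟨tendsto_order.2 ⟨fun u hu => ?_, fun u hu => ?_⟩, hgt⟩
  · exact hgt.mono fun c hc => hu.trans hc
  · obtain ⟨v, hpeakv, hv⟩ := exists_between (lt_min hu P.peak_lt_valley)
    have hv' : v ∈ Icc P.peak P.valley := ⟨hpeakv.le, hv.le.trans (min_le_right _ _)⟩
    have hvdom : v ∈ P.dom := P.Icc_peak_valley_subset_dom hv'
    have hFv : P.F v < P.cmax := hF ▸ P.strictAntiOn_Icc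
      ⟨P.peak_mem_dom, le_rfl, P.peak_lt_valley.le⟩ ⟨hvdom, hv'⟩ hpeakv
    filter_upwards [P.levels_mem_nhdsLT_cmax, Ioo_mem_nhdsLT hFv] with c hc hlt
    exact (mid_lt_of_F_lt hc hvdom hv' hlt.1).trans (hv.trans_le (min_le_left _ _))

end Roots

/-- `W` is the orbit graph of a monotone front at level `c` with damping `k + ν g₂`. -/
def IsConnection (P : BistableField) (k : ℝ → ℝ) (c ν : ℝ) (W : ℝ → ℝ) : Prop :=
  IsOrbitGraph (P.force c) (fun u => k u + ν * P.g₂ u) (P.left c) (P.right c) W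

/-- `ν` is a speed function for the damping `k`: at every level `c` there is a monotone front with
damping `k + ν c g₂`. -/
def IsConnectionSpeed (P : BistableField) (k ν : ℝ → ℝ) : Prop :=
  ∀ c ∈ P.levels, ∃ W, P.IsConnection k c (ν c) W

variable {k ν W X : ℝ → ℝ} {μ μ' : ℝ}

theorem IsConnection.reflect (h : P.IsConnection k c μ W) :
    P.reflect.IsConnection (fun v => -k (-v)) (-c) (-μ) (fun v => W (-v)) := by
  simpa only [IsConnection, funext (reflect_force _), reflect_left, reflect_right, reflect_g₂,
    neg_neg, neg_add, neg_mul] using IsOrbitGraph.reflect h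

theorem IsConnectionSpeed.reflect (h : P.IsConnectionSpeed k ν) :
    P.reflect.IsConnectionSpeed (fun v => -k (-v)) (fun c => -ν (-c)) := fun c hc => by
  obtain ⟨W, hW⟩ := h (-c) (neg_mem_Ioo_iff.2 hc)
  exact ⟨_, by simpa only [neg_neg] using hW.reflect⟩

theorem IsConnectionSpeed.strictMonoOn (h : P.IsConnectionSpeed k ν) :
    StrictMonoOn ν P.levels := fun c hc c' hc' hcc' => by
  by_contra! hν
  obtain ⟨W, hW⟩ := h c hc
  obtain ⟨X, hX⟩ := h c' hc'
  have hdom : ∀ u ∈ Ioo (P.left c') (P.right c), u ∈ P.dom := fun u hu =>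
    P.ordConnected_dom.out (P.left_mem_dom c' hc') (P.right_mem_dom c hc) ⟨hu.1.le, hu.2.le⟩
  exact hW.not_lt_of_lt hX (P.strictMonoOn_left hc hc' hcc')
    ((left_lt_peak hc').trans (P.peak_lt_valley.trans (valley_lt_right hc)))
    (fun u hu => force_strictAnti (hdom u hu) hcc')
    (fun u hu => by
      have hdamp := mul_le_mul_of_nonneg_right hν (P.g₂_pos u (hdom u hu)).le
      linarith)
    (P.strictMonoOn_right hc hc' hcc')

section EndBounds

variable {x y σ : ℝ}

theorem exists_right_end_bound (hk : ContinuousOn k P.dom) (hxy : Icc x y ⊆ P.dom) (μ : ℝ)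
    (hσ : 0 < σ) : ∃ Q, 0 ≤ Q ∧ ∀ c ∈ P.levels, ∀ μ' ≥ μ, ∀ W, P.IsConnection k c μ' W →
      P.right c ≤ y → ∀ q ∈ Icc (P.left c) (P.right c), x ≤ q → W q ≤ σ + Q * (P.right c - q) := by
  obtain ⟨α, hα⟩ := isCompact_Icc.exists_bound_of_continuousOn
    ((continuousOn_force P.cmax).mono hxy)
  obtain ⟨β, hβ⟩ := isCompact_Icc.exists_bound_of_continuousOn
    ((hk.add (P.continuousOn_g₂.const_mul μ)).mono hxy)
  have hQ : 0 ≤ |α| / σ + |β| + 1 := by positivity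
  refine ⟨|α| / σ + |β| + 1, hQ, fun c hc μ' hμ W hW hy q hq hxq => ?_⟩
  have hsub : ∀ u ∈ Ioo q (P.right c), u ∈ Icc x y := fun u hu =>
    ⟨hxq.trans hu.1.le, hu.2.le.trans hy⟩
  refine IsOrbitGraph.le_add_mul_sub_right hW hq (abs_nonneg α) hσ hQ (fun u hu => ?_)
    (β := |β|) (fun u hu => ?_) (lt_add_one _)
  · have hlevel := (force_strictAnti (hxy (hsub u hu)) hc.2).le
    have hbound := (abs_le.1 ((hα u (hsub u hu)).trans (le_abs_self α))).1
    exact hbound.trans hlevel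
  · have hspeed := mul_le_mul_of_nonneg_right hμ (P.g₂_pos u (hxy (hsub u hu))).le
    have hbound := (abs_le.1 ((hβ u (hsub u hu)).trans (le_abs_self β))).1
    exact hbound.trans (add_le_add_right hspeed (k u))

theorem exists_left_end_bound (hk : ContinuousOn k P.dom) (hxy : Icc x y ⊆ P.dom) (μ : ℝ)
    (hσ : 0 < σ) : ∃ Q, 0 ≤ Q ∧ ∀ c ∈ P.levels, ∀ μ' ≤ μ, ∀ W, P.IsConnection k c μ' W →
      x ≤ P.left c → ∀ q ∈ Icc (P.left c) (P.right c), q ≤ y → W q ≤ σ + Q * (q - P.left c) := by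
  obtain ⟨Q, hQ, hbound⟩ := exists_right_end_bound (P := P.reflect) (continuousOn_comp_neg hk).neg
    (x := -y) (y := -x) (fun v hv => hxy (neg_mem_Icc_iff.2 hv)) (-μ) hσ
  refine ⟨Q, hQ, fun c hc μ' hμ W hW hx q hq hqy => ?_⟩
  have := hbound (-c) (neg_mem_levels hc) (-μ') (neg_le_neg hμ) _ hW.reflect
    (by simpa only [reflect_right, neg_neg] using neg_le_neg hx) (-q)
    (by simpa only [reflect_left, reflect_right, neg_neg] using neg_mem_Icc_iff.2 (by
      simpa only [neg_neg] using hq)) (neg_le_neg hqy)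
  simpa only [reflect_right, neg_neg, neg_sub_neg] using this

end EndBounds

section Continuity

variable {p q η δ : ℝ}

/-- Between `p` and `q` the line `X - W = η (u - mid c')` is a barrier that the larger damping keeps
`X` above, so that `X q` cannot be small. -/
theorem IsConnection.lt_add (hW : P.IsConnection k c μ W) (hX : P.IsConnection k c' μ' X)
    (hc : c ∈ P.levels) (hc' : c' ∈ P.levels) (hcc' : c < c') (hp : P.left c < p)
    (hp' : P.left c' < p) (hpq : p ≤ q) (hq : q < P.right c) (hη : 0 ≤ η)
    (hg₂ : ∀ u ∈ Ioo p q, 2 * η ≤ δ * P.g₂ u)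
    (hg₁ : ∀ u ∈ Ioo p q, (c' - c) * (P.g₁ u / W u) < η)
    (hWp : W p ≤ η * (P.peak - p)) (hXq : X q < η * (q - P.valley)) : μ' < μ + δ := by
  by_contra! hμ
  have hq' : q < P.right c' := hq.trans (P.strictMonoOn_right hc hc' hcc')
  have hXp := hX.pos p ⟨hp', hpq.trans_lt hq'⟩
  have hWq := hW.pos q ⟨hp.trans_le hpq, hq⟩
  have hbarrier : η * (q - P.mid c') ≤ X q - W q := by
    refine IsOrbitGraph.mul_sub_le_sub hW hX hp hp' hpq hq hq' hη (fun u hu => ?_)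
      (fun u hu => ?_) ?_
    · rcases lt_trichotomy u (P.mid c') with hum | rfl | hum
      · exact mul_nonneg (force_pos hc' ⟨hp'.trans hu.1, hum⟩).le (sub_nonneg.2 hum.le)
      · rw [sub_self, mul_zero]
      · exact mul_nonneg_of_nonpos_of_nonpos (force_neg hc' ⟨hum, hu.2.trans hq'⟩).le
          (sub_nonpos.2 hum.le)
    · have hdom := Icc_subset_dom hc ⟨hp.le.trans hu.1.le, hu.2.le.trans hq.le⟩
      have hdamp := mul_le_mul_of_nonneg_right hμ (P.g₂_pos u hdom).le
      have hforce : (P.force c' u - P.force c u) / W u = -((c' - c) * (P.g₁ u / W u)) := by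
        simp only [force]
        ring
      linarith [hg₁ u hu, hg₂ u hu]
    · linarith [mul_le_mul_of_nonneg_left (peak_lt_mid hc').le hη]
  linarith [mul_le_mul_of_nonneg_left (mid_lt_valley hc').le hη]

theorem exists_right_barrier (hk : ContinuousOn k P.dom) (hc : c ∈ P.levels) (μ : ℝ)
    (hη : 0 < η) : ∃ q ∈ Ioo P.valley (P.right c), ∀ᶠ c' in 𝓝[>] c, ∀ μ' ≥ μ, ∀ X,
      P.IsConnection k c' μ' X → X q < η * (q - P.valley) := by
  have hgap : 0 < P.right c - P.valley := sub_pos.2 (valley_lt_right hc)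
  obtain ⟨y, hy, hcy⟩ : ∃ y ∈ P.dom, P.right c < y := by
    have hdom : ∀ᶠ y in 𝓝[>] P.right c, y ∈ P.dom :=
      mem_nhdsWithin_of_mem_nhds (P.isOpen_dom.mem_nhds (P.right_mem_dom c hc))
    exact (hdom.and self_mem_nhdsWithin).exists
  obtain ⟨Q, hQ, hbound⟩ := exists_right_end_bound hk
    (P.ordConnected_dom.out (P.left_mem_dom c hc) hy) μ (σ := η * (P.right c - P.valley) / 2)
    (by positivity)
  obtain ⟨ε, hεQ, hε, hεgap⟩ : ∃ ε,
      η * (P.right c - P.valley) / 2 + Q * (2 * ε) < η * (P.right c - P.valley - ε) ∧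
      ε ∈ Ioo 0 (min (P.right c - P.valley) (y - P.right c)) := by
    have hlim : ∀ᶠ ε in 𝓝[>] (0 : ℝ), η * (P.right c - P.valley) / 2 + Q * (2 * ε)
        < η * (P.right c - P.valley - ε) :=
      nhdsWithin_le_nhds (ContinuousAt.eventually_lt (by fun_prop) (by fun_prop)
        (by simpa using half_lt_self (mul_pos hη hgap)))
    exact (hlim.and (Ioo_mem_nhdsGT (lt_min hgap (sub_pos.2 hcy)))).exists
  obtain ⟨hεvalley, hεy⟩ := lt_min_iff.1 hεgap
  have hdomε : P.right c + ε ∈ P.dom :=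
    P.ordConnected_dom.out (P.right_mem_dom c hc) hy ⟨by linarith, by linarith⟩
  have hright := eventually_right_lt hc hdomε (lt_add_of_pos_right _ hε)
  refine ⟨P.right c - ε, ⟨by linarith, by linarith⟩, ?_⟩
  filter_upwards [nhdsWithin_le_nhds hright, nhdsWithin_le_nhds (levels_mem_nhds hc),
    self_mem_nhdsWithin] with c' hright' hc' hcc' μ' hμ X hX
  have hrr' := P.strictMonoOn_right hc hc' hcc'
  calc X (P.right c - ε)
      ≤ η * (P.right c - P.valley) / 2 + Q * (P.right c' - (P.right c - ε)) :=
        hbound c' hc' μ' hμ X hX (by linarith) _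
          ⟨by linarith [left_lt_peak hc', P.peak_lt_valley], by linarith⟩
          (by linarith [left_lt_peak hc, P.peak_lt_valley])
    _ ≤ η * (P.right c - P.valley) / 2 + Q * (2 * ε) := by
        gcongr
        linarith
    _ < η * (P.right c - ε - P.valley) := by
        rwa [sub_right_comm]

theorem IsConnection.exists_left_barrier (hW : P.IsConnection k c μ W) (hc : c ∈ P.levels)
    (hη : 0 < η) : ∃ p ∈ Ioo (P.left c) P.peak, W p ≤ η * (P.peak - p) := by
  have hcont : ContinuousWithinAt W (Ioi (P.left c)) (P.left c) := by
    rw [continuousWithinAt_Ioi_iff_Ici, ← continuousWithinAt_Icc_iff_Ici (left_lt_right hc)]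
    exact hW.continuousOn _ (left_mem_Icc.2 (left_lt_right hc).le)
  have hsmall : ∀ᶠ p in 𝓝[>] P.left c, W p < η * (P.peak - p) :=
    Tendsto.eventually_lt hcont (ContinuousWithinAt.tendsto (by fun_prop))
      (by rw [hW.apply_left]; exact mul_pos hη (sub_pos.2 (left_lt_peak hc)))
  obtain ⟨p, hWp, hp⟩ := (hsmall.and (Ioo_mem_nhdsGT (left_lt_peak hc))).exists
  exact ⟨p, hp, hWp.le⟩

theorem IsConnectionSpeed.eventually_lt_add (h : P.IsConnectionSpeed k ν)
    (hk : ContinuousOn k P.dom) (hc : c ∈ P.levels) (hδ : 0 < δ) :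
    ∀ᶠ c' in 𝓝[>] c, ν c' < ν c + δ := by
  obtain ⟨W, hW⟩ := h c hc
  have hdom := Icc_subset_dom hc
  obtain ⟨γ, hγ, hγg₂⟩ := isCompact_Icc.exists_forall_le' (P.continuousOn_g₂.mono hdom)
    fun u hu => P.g₂_pos u (hdom hu)
  have hη : 0 < δ * γ / 2 := by positivity
  obtain ⟨p, hp, hWp⟩ := hW.exists_left_barrier hc hη
  obtain ⟨q, hq, hXq⟩ := exists_right_barrier hk hc (ν c) hη
  have hpq : p < q := hp.2.trans (P.peak_lt_valley.trans hq.1)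
  have hsub : Icc p q ⊆ Ioo (P.left c) (P.right c) := Icc_subset_Ioo hp.1 hq.2
  obtain ⟨C, hC⟩ := isCompact_Icc.exists_bound_of_continuousOn
    (f := fun u => P.g₁ u / W u) (s := Icc p q) <|
    (P.continuousOn_g₁.mono ((hsub.trans Ioo_subset_Icc_self).trans hdom)).div
      (hW.continuousOn.mono (hsub.trans Ioo_subset_Icc_self)) fun u hu => (hW.pos u (hsub hu)).ne'
  have hclose : ∀ᶠ c' in 𝓝 c, (c' - c) * C < δ * γ / 2 :=
    ContinuousAt.eventually_lt (by fun_prop) continuousAt_const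
      (by rwa [sub_self, zero_mul])
  filter_upwards [hXq, self_mem_nhdsWithin, nhdsWithin_le_nhds (levels_mem_nhds hc),
    nhdsWithin_le_nhds (eventually_left_lt hc hp.1), nhdsWithin_le_nhds hclose]
    with c' hXq hcc' hc' hleft hclose
  obtain ⟨X, hX⟩ := h c' hc'
  refine hW.lt_add hX hc hc' hcc' hp.1 hleft hpq.le hq.2 hη.le (fun u hu => ?_) (fun u hu => ?_)
    hWp (hXq _ (h.strictMonoOn hc hc' hcc').le X hX)
  · have hdamp := mul_le_mul_of_nonneg_left
      (hγg₂ u (Ioo_subset_Icc_self (hsub (Ioo_subset_Icc_self hu)))) hδ.le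
    linarith
  · exact (mul_le_mul_of_nonneg_left ((le_abs_self _).trans (hC u (Ioo_subset_Icc_self hu)))
      (sub_pos.2 hcc').le).trans_lt hclose

theorem IsConnectionSpeed.eventually_sub_lt (h : P.IsConnectionSpeed k ν)
    (hk : ContinuousOn k P.dom) (hc : c ∈ P.levels) (hδ : 0 < δ) :
    ∀ᶠ c' in 𝓝[<] c, ν c - δ < ν c' := by
  have hreflect := h.reflect.eventually_lt_add (continuousOn_comp_neg hk).neg (neg_mem_levels hc) hδ
  filter_upwards [tendsto_neg_nhdsLT.eventually hreflect] with c' hc'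
  rw [neg_neg, neg_neg] at hc'
  linarith

theorem IsConnectionSpeed.continuousOn (h : P.IsConnectionSpeed k ν) (hk : ContinuousOn k P.dom) :
    ContinuousOn ν P.levels := fun c hc => by
  refine ContinuousAt.continuousWithinAt (continuousAt_iff_continuous_left'_right'.2 ⟨?_, ?_⟩)
  · refine tendsto_order.2 ⟨fun x hx => ?_, fun x hx => ?_⟩
    · simpa only [sub_sub_cancel] using h.eventually_sub_lt hk hc (sub_pos.2 hx)
    · filter_upwards [nhdsWithin_le_nhds (levels_mem_nhds hc), self_mem_nhdsWithin] with c' hc' hlt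
      exact (h.strictMonoOn hc' hc hlt).trans hx
  · refine tendsto_order.2 ⟨fun x hx => ?_, fun x hx => ?_⟩
    · filter_upwards [nhdsWithin_le_nhds (levels_mem_nhds hc), self_mem_nhdsWithin] with c' hc' hlt
      exact hx.trans (h.strictMonoOn hc hc' hlt)
    · simpa only [add_sub_cancel] using h.eventually_lt_add hk hc (sub_pos.2 hx)

end Continuity

section Ends

variable {d : ℝ → ℝ} {ν' : ℝ → ℝ} {x μ₀ : ℝ}

theorem IsConnection.le_add_integral (hW : P.IsConnection k c μ W) (hk : ContinuousOn k P.dom)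
    (hc : c ∈ P.levels) (hμ : μ ≤ μ₀) (hx : x ∈ Ico (P.mid c) (P.right c)) :
    W x ≤ W (P.mid c) + ∫ u in P.mid c..x, (k u + μ₀ * P.g₂ u) := by
  have hleft := P.left_lt_mid c hc
  have hdom : Icc (P.mid c) x ⊆ P.dom :=
    (Icc_subset_Icc hleft.le hx.2.le).trans (Icc_subset_dom hc)
  rw [← sub_le_iff_le_add']
  refine intervalIntegral.sub_le_integral_of_hasDeriv_right_of_le hx.1
    (hW.continuousOn.mono (Icc_subset_Icc hleft.le hx.2.le))
    (fun u hu => (hW.hasDerivAt u ⟨hleft.trans hu.1, hu.2.trans hx.2⟩).hasDerivWithinAt)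
    ((hk.add (P.continuousOn_g₂.const_mul μ₀)).mono hdom).integrableOn_Icc fun u hu => ?_
  have hforce := div_nonpos_of_nonpos_of_nonneg
    (force_neg hc ⟨hu.1, hu.2.trans hx.2⟩).le (hW.pos u ⟨hleft.trans hu.1, hu.2.trans hx.2⟩).le
  have hspeed := mul_le_mul_of_nonneg_right hμ (P.g₂_pos u (hdom (Ioo_subset_Icc_self hu))).le
  linarith

theorem tendsto_integral_mid {g : ℝ → ℝ} (hF : P.F P.peak = P.cmax) (hx : P.peak < x)
    (hg : ContinuousOn g (Icc P.peak x)) :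
    Tendsto (fun c => ∫ u in P.mid c..x, g u) (𝓝[<] P.cmax) (𝓝 (∫ u in P.peak..x, g u)) := by
  rw [← uIcc_of_le hx.le] at hg
  have hcont := intervalIntegral.continuousOn_primitive_interval_left (μ := volume)
    (hg.integrableOn_compact isCompact_uIcc)
  rw [uIcc_of_le hx.le] at hcont
  exact ((hcont P.peak ⟨le_rfl, hx.le⟩).mono_of_mem_nhdsWithin (Icc_mem_nhdsGT hx)).tendsto.comp
    (tendsto_mid_cmax hF)

/-- As `c` tends to `cmax` the part of the front to the left of `mid c` shrinks to a point, and to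
the right of it the force is negative. -/
theorem IsConnectionSpeed.eventually_lt_of_integral_neg (h : P.IsConnectionSpeed k ν)
    (hk : ContinuousOn k P.dom) (hF : P.F P.peak = P.cmax) (hx : x ∈ Ioc P.peak P.valley)
    (hneg : ∫ u in P.peak..x, (k u + μ₀ * P.g₂ u) < 0) : ∀ᶠ c in 𝓝[<] P.cmax, μ₀ < ν c := by
  obtain ⟨c₀, hc₀⟩ := P.levels_nonempty
  set I := ∫ u in P.peak..x, (k u + μ₀ * P.g₂ u) with hI
  have hdom : Icc (P.left c₀) x ⊆ P.dom :=
    P.ordConnected_dom.out (P.left_mem_dom c₀ hc₀) (P.Icc_peak_valley_subset_dom ⟨hx.1.le, hx.2⟩)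
  obtain ⟨Q, -, hbound⟩ := exists_left_end_bound hk hdom μ₀ (σ := -I / 2) (by linarith)
  have hintegral := tendsto_integral_mid (g := fun u => k u + μ₀ * P.g₂ u) hF hx.1
    ((hk.add (P.continuousOn_g₂.const_mul μ₀)).mono
      ((Icc_subset_Icc_left (left_lt_peak hc₀).le).trans hdom))
  have hlim : Tendsto (fun c => -I / 2 + Q * (P.mid c - P.left c)
      + ∫ u in P.mid c..x, (k u + μ₀ * P.g₂ u)) (𝓝[<] P.cmax) (𝓝 (I / 2)) := by
    have hmid := (tendsto_mid_cmax hF).mono_right nhdsWithin_le_nhds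
    have hleft := (tendsto_left_cmax hF).mono_right nhdsWithin_le_nhds
    convert (((hmid.sub hleft).const_mul Q).const_add (-I / 2)).add hintegral using 2
    rw [← hI]
    ring
  filter_upwards [Ioo_mem_nhdsLT hc₀.2,
    hlim.eventually_lt_const (div_neg_of_neg_of_pos hneg two_pos),
    (tendsto_mid_cmax hF).eventually (Ioo_mem_nhdsGT hx.1)] with c hc₀c hsmall hmid
  have hc : c ∈ P.levels := ⟨hc₀.1.trans hc₀c.1, hc₀c.2⟩
  by_contra! hν
  obtain ⟨W, hW⟩ := h c hc
  have hxright := hx.2.trans_lt (valley_lt_right hc)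
  have hWmid := hbound c hc (ν c) hν W hW (P.strictMonoOn_left hc₀ hc hc₀c.1).le (P.mid c)
    ⟨(P.left_lt_mid c hc).le, (P.mid_lt_right c hc).le⟩ hmid.2.le
  have hWx := hW.le_add_integral hk hc hν ⟨hmid.2.le, hxright⟩
  linarith [hW.pos x ⟨(left_lt_peak hc).trans hx.1, hxright⟩]

theorem exists_pos_integral_neg (hd : ContinuousOn d P.dom)
    (hneg : ∀ u ∈ Ioo P.peak P.valley, d u < 0) :
    ∃ μ₀ > 0, ∫ u in P.peak..P.valley, (P.g₂ u * d u + μ₀ * P.g₂ u) < 0 := by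
  have hdom := P.Icc_peak_valley_subset_dom
  have hle := P.peak_lt_valley.le
  have hg₂ : IntervalIntegrable P.g₂ volume P.peak P.valley :=
    (P.continuousOn_g₂.mono hdom).intervalIntegrable_of_Icc hle
  have hgd : IntervalIntegrable (fun u => P.g₂ u * d u) volume P.peak P.valley :=
    ((P.continuousOn_g₂.mul hd).mono hdom).intervalIntegrable_of_Icc hle
  have hJ : 0 < ∫ u in P.peak..P.valley, -(P.g₂ u * d u) :=
    intervalIntegral.intervalIntegral_pos_of_pos_on hgd.neg (fun u hu => neg_pos.2 <|
      mul_neg_of_pos_of_neg (P.g₂_pos u (hdom (Ioo_subset_Icc_self hu))) (hneg u hu))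
      P.peak_lt_valley
  have hG : 0 < ∫ u in P.peak..P.valley, P.g₂ u :=
    intervalIntegral.intervalIntegral_pos_of_pos_on hg₂
      (fun u hu => P.g₂_pos u (hdom (Ioo_subset_Icc_self hu))) P.peak_lt_valley
  rw [intervalIntegral.integral_neg] at hJ
  refine ⟨-(∫ u in P.peak..P.valley, P.g₂ u * d u) / 2 / ∫ u in P.peak..P.valley, P.g₂ u,
    by positivity, ?_⟩
  rw [intervalIntegral.integral_add hgd (hg₂.const_mul _), intervalIntegral.integral_const_mul,
    div_mul_cancel₀ _ hG.ne']
  linarith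

theorem exists_integral_neg_near_peak (hd : ContinuousOn d P.dom) (hpeak : d P.peak = 0)
    (hμ₀ : 0 < μ₀) : ∃ x ∈ Ioc P.peak P.valley,
      ∫ u in P.peak..x, (-(P.g₂ u * d u) + -μ₀ * P.g₂ u) < 0 := by
  have hsmall : ∀ᶠ u in 𝓝[>] P.peak, -μ₀ < d u :=
    nhdsWithin_le_nhds <| (hd.continuousAt <|
      P.isOpen_dom.mem_nhds P.peak_mem_dom).eventually_const_lt (by rwa [hpeak, neg_lt_zero])
  obtain ⟨x, hpx, hx⟩ := (mem_nhdsGT_iff_exists_mem_Ioc_Ioo_subset P.peak_lt_valley).1 hsmall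
  have hdom : Icc P.peak x ⊆ P.dom :=
    (Icc_subset_Icc_right hpx.2).trans P.Icc_peak_valley_subset_dom
  refine ⟨x, hpx, ?_⟩
  have hpos : 0 < ∫ u in P.peak..x, P.g₂ u * (d u + μ₀) :=
    intervalIntegral.intervalIntegral_pos_of_pos_on
      (((P.continuousOn_g₂.mul (hd.add continuousOn_const)).mono hdom).intervalIntegrable_of_Icc
        hpx.1.le)
      (fun u hu => mul_pos (P.g₂_pos u (hdom (Ioo_subset_Icc_self hu)))
        (neg_lt_iff_pos_add.1 (hx hu))) hpx.1
  rw [← neg_pos, ← intervalIntegral.integral_neg]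
  convert hpos using 3
  ring

theorem exists_add_pos (hd : ContinuousOn d P.dom) (hpeak : d P.peak = 0)
    (hneg : ∀ u ∈ Ioo P.peak P.valley, d u < 0) (hF : P.F P.peak = P.cmax)
    (hν : P.IsConnectionSpeed (fun u => P.g₂ u * d u) ν)
    (hν' : P.IsConnectionSpeed (fun u => -(P.g₂ u * d u)) ν') :
    ∃ c ∈ P.levels, 0 < ν c + ν' c := by
  obtain ⟨μ₀, hμ₀, hintegral⟩ := exists_pos_integral_neg hd hneg
  obtain ⟨x, hx, hintegral'⟩ := exists_integral_neg_near_peak hd hpeak hμ₀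
  have hhigh := hν.eventually_lt_of_integral_neg (P.continuousOn_g₂.mul hd) hF
    ⟨P.peak_lt_valley, le_rfl⟩ hintegral
  have hhigh' := hν'.eventually_lt_of_integral_neg (P.continuousOn_g₂.mul hd).neg hF hx
    hintegral'
  have hlevels : ∀ᶠ c in 𝓝[<] P.cmax, c ∈ P.levels := P.levels_mem_nhdsLT_cmax
  obtain ⟨c, hc, h, h'⟩ := (hlevels.and (hhigh.and hhigh')).exists
  exact ⟨c, hc, by linarith⟩

theorem exists_add_neg_of_F_valley (hd : ContinuousOn d P.dom) (hvalley : d P.valley = 0)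
    (hneg : ∀ u ∈ Ioo P.peak P.valley, d u < 0) (hF : P.F P.valley = P.cmin)
    (hν : P.IsConnectionSpeed (fun u => P.g₂ u * d u) ν)
    (hν' : P.IsConnectionSpeed (fun u => -(P.g₂ u * d u)) ν') :
    ∃ c ∈ P.levels, ν c + ν' c < 0 := by
  obtain ⟨c, hc, hpos⟩ := exists_add_pos (P := P.reflect) (d := fun v => d (-v))
    (continuousOn_comp_neg hd) (by simpa only [reflect_peak, neg_neg] using hvalley)
    (fun u hu => hneg (-u) (neg_mem_Ioo_iff.2 hu))
    (by simp only [reflect_peak, reflect_F, neg_neg, reflect_cmax, hF])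
    (by simpa only [reflect_g₂, neg_neg] using hν'.reflect) hν.reflect
  refine ⟨-c, neg_mem_Ioo_iff.2 hc, by linarith⟩

/-- `s` is the lower edge of the domain, the force on `(y c, p)` dominates `α g₂` for `c` near
`cmin`, where `y c` tends to `s`, but `g₂` is not integrable at `s`. This bounds speeds from above:
a front stays bounded at `p`, so its damping has to be negative enough somewhere below `p`. -/
structure HasSingularEdge (P : BistableField) (s p α : ℝ) (y : ℝ → ℝ) : Prop where
  dom_subset : P.dom ⊆ Ioi s
  Ioc_subset_dom : Ioc s p ⊆ P.dom
  lt : s < p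
  lt_peak : p < P.peak
  pos : 0 < α
  tendsto : Tendsto y (𝓝[>] P.cmin) (𝓝 s)
  left_le : ∀ᶠ c in 𝓝[>] P.cmin, P.left c ≤ y c
  le_force : ∀ᶠ c in 𝓝[>] P.cmin, ∀ u ∈ Ioo (y c) p, α * P.g₂ u ≤ P.force c u
  not_integrableOn : ¬ IntegrableOn P.g₂ (Ioc s p)

variable {s p q α : ℝ} {y : ℝ → ℝ}

theorem HasSingularEdge.mono (h : P.HasSingularEdge s p α y) (hq : q ∈ Ioc s p) :
    P.HasSingularEdge s q α y where
  __ := h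
  Ioc_subset_dom := (Ioc_subset_Ioc_right hq.2).trans h.Ioc_subset_dom
  lt := hq.1
  lt_peak := hq.2.trans_lt h.lt_peak
  le_force := h.le_force.mono fun _ hc u hu => hc u ⟨hu.1, hu.2.trans_le hq.2⟩
  not_integrableOn hint := h.not_integrableOn <| by
    rw [← Ioc_union_Icc_eq_Ioc hq.1 hq.2]
    exact hint.union (P.continuousOn_g₂.mono fun u hu =>
      h.Ioc_subset_dom ⟨hq.1.trans_le hu.1, hu.2⟩).integrableOn_Icc

theorem HasSingularEdge.not_frequently_integral_le (h : P.HasSingularEdge s p α y) (I : ℝ) :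
    ¬ ∃ᶠ c in 𝓝[>] P.cmin, y c < p ∧ P.left c ≤ y c ∧ c ∈ P.levels ∧
      ∫ u in y c..p, P.g₂ u ≤ I := fun hfreq => by
  obtain ⟨c, hlim, hc⟩ := exists_seq_forall_of_frequently hfreq
  have hdom : ∀ n, Icc (y (c n)) p ⊆ P.dom := fun n =>
    (Icc_subset_Icc_left (hc n).2.1).trans <| P.ordConnected_dom.out
      (P.left_mem_dom _ (hc n).2.2.1) (h.Ioc_subset_dom ⟨h.lt, le_rfl⟩)
  refine h.not_integrableOn (integrableOn_Ioc_of_intervalIntegral_norm_bounded_left (I := I)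
    (fun n => ((P.continuousOn_g₂.mono (hdom n)).integrableOn_Icc).mono_set Ioc_subset_Icc_self)
    (h.tendsto.comp hlim) (Eventually.of_forall fun n => ?_))
  have hnorm : ∀ u ∈ Ioc (y (c n)) p, ‖P.g₂ u‖ = P.g₂ u := fun u hu =>
    Real.norm_of_nonneg (P.g₂_pos u (hdom n (Ioc_subset_Icc_self hu))).le
  rw [setIntegral_congr_fun measurableSet_Ioc hnorm,
    ← intervalIntegral.integral_of_le (hc n).1.le]
  exact (hc n).2.2.2

theorem exists_apply_lt {c₀ : ℝ} (hk : ContinuousOn k P.dom) (hp : p ∈ P.dom)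
    (hpvalley : p < P.valley) (hc₀ : c₀ ∈ P.levels) (ν₁ : ℝ) :
    ∃ M > 0, ∀ c ∈ P.levels, c < c₀ → ∀ μ ≥ ν₁, ∀ W, P.IsConnection k c μ W →
      P.left c ≤ p → W p < M := by
  obtain ⟨Q, hQ, hbound⟩ := exists_right_end_bound hk
    (P.ordConnected_dom.out hp (P.right_mem_dom c₀ hc₀)) ν₁ one_pos
  have hlength₀ := mul_nonneg hQ (sub_pos.2 (hpvalley.trans (valley_lt_right hc₀))).le
  refine ⟨2 + Q * (P.right c₀ - p), by linarith, fun c hc hcc₀ μ hμ W hW hleft => ?_⟩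
  have hright := (P.strictMonoOn_right hc hc₀ hcc₀).le
  have hend := hbound c hc μ hμ W hW hright p
    ⟨hleft, (hpvalley.trans (valley_lt_right hc)).le⟩ le_rfl
  linarith [mul_le_mul_of_nonneg_left (sub_le_sub_right hright p) hQ]

theorem HasSingularEdge.exists_eventually_lt (hE : P.HasSingularEdge s p α y)
    (h : P.IsConnectionSpeed k ν) (hk : ContinuousOn k P.dom) (ν₁ : ℝ) :
    ∃ η > 0, ∀ μ₀ ≥ ν₁, (∀ u ∈ Ioo s p, -(η * P.g₂ u) ≤ k u + μ₀ * P.g₂ u) →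
      ∀ᶠ c in 𝓝[>] P.cmin, ν c < μ₀ := by
  have hp : p ∈ P.dom := hE.Ioc_subset_dom ⟨hE.lt, le_rfl⟩
  have hpvalley := hE.lt_peak.trans P.peak_lt_valley
  obtain ⟨c₀, hc₀⟩ := P.levels_nonempty
  obtain ⟨M, hM, hbound⟩ := exists_apply_lt hk hp hpvalley hc₀ ν₁
  refine ⟨α / 2 / M, div_pos (half_pos hE.pos) hM, fun μ₀ hμ₀ hdamp => ?_⟩
  by_contra hfreq
  refine hE.not_frequently_integral_le (M ^ 2 / α)
    (((not_eventually.1 hfreq).and_eventually (hE.left_le.and (hE.le_force.and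
      ((hE.tendsto.eventually_lt_const hE.lt).and (Ioo_mem_nhdsGT hc₀.1))))).mono ?_)
  rintro c ⟨hν, hleft, hforce, hyp, hcc₀⟩
  have hc : c ∈ P.levels := ⟨hcc₀.1, hcc₀.2.trans hc₀.2⟩
  have hν₁ : ν₁ ≤ ν c := hμ₀.le.trans (not_lt.1 hν)
  have hdom : Icc (P.left c) p ⊆ P.dom := P.ordConnected_dom.out (P.left_mem_dom c hc) hp
  have hdom' : ∀ u ∈ Ioo (y c) p, u ∈ P.dom := fun u hu => hdom ⟨hleft.trans hu.1.le, hu.2.le⟩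
  obtain ⟨W, hW⟩ := h c hc
  have hWp : W p < M := hbound c hc hcc₀.2 _ hν₁ W hW (hleft.trans_lt hyp).le
  exact ⟨hyp, hleft, hc, hW.integral_le_sq_div hleft hyp
    (hpvalley.trans (valley_lt_right hc)) hE.pos
    (div_pos (half_pos hE.pos) hM).le (div_mul_cancel₀ _ hM.ne').le
    (P.continuousOn_g₂.mono ((Icc_subset_Icc_left hleft).trans hdom))
    (fun u hu => P.g₂_pos u (hdom' u hu)) hforce
    (fun u hu => (hdamp u ⟨hE.dom_subset (hdom' u hu), hu.2⟩).trans <|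
      add_le_add_right (mul_le_mul_of_nonneg_right (not_lt.1 hν) (P.g₂_pos u (hdom' u hu)).le) _)
    hWp⟩

theorem HasSingularEdge.exists_add_neg {d₀ : ℝ} (hE : P.HasSingularEdge s p α y)
    (hd : ContinuousOn d P.dom) (hle : ∀ u ∈ Ioo s p, d u ≤ d₀)
    (hlim : Tendsto d (𝓝[>] s) (𝓝 d₀))
    (hν : P.IsConnectionSpeed (fun u => P.g₂ u * d u) ν)
    (hν' : P.IsConnectionSpeed (fun u => -(P.g₂ u * d u)) ν') :
    ∃ c ∈ P.levels, ν c + ν' c < 0 := by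
  have hk := P.continuousOn_g₂.mul hd
  have hg₂ : ∀ u ∈ Ioo s p, 0 < P.g₂ u := fun u hu =>
    P.g₂_pos u (hE.Ioc_subset_dom (Ioo_subset_Ioc_self hu))
  obtain ⟨η, hη, hν'_lt⟩ := hE.exists_eventually_lt hν' hk.neg (d₀ - 1)
  obtain ⟨ε, hε, hεη⟩ : ∃ ε > 0, ε ≤ min η 1 := ⟨_, lt_min hη one_pos, le_rfl⟩
  obtain ⟨hεη, hε1⟩ := le_min_iff.1 hεη
  have hlow' : ∀ᶠ c in 𝓝[>] P.cmin, ν' c < d₀ - ε :=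
    hν'_lt _ (sub_le_sub_left hε1 d₀) fun u hu => by
      have hdiff := mul_le_mul_of_nonneg_left (hle u hu) (hg₂ u hu).le
      have hsmall := mul_le_mul_of_nonneg_right hεη (hg₂ u hu).le
      linarith
  obtain ⟨q, hq, hdq⟩ := (mem_nhdsGT_iff_exists_mem_Ioc_Ioo_subset hE.lt).1
    (hlim.eventually_const_lt (sub_lt_self d₀ hε))
  obtain ⟨η', hη', hν_lt⟩ := (hE.mono hq).exists_eventually_lt hν hk (ε - d₀)
  have hlow : ∀ᶠ c in 𝓝[>] P.cmin, ν c < ε - d₀ := hν_lt _ le_rfl fun u hu => by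
    have hpos := hg₂ u ⟨hu.1, hu.2.trans_le hq.2⟩
    have hdiff := mul_pos hpos (sub_pos.2 (hdq hu))
    linarith [mul_pos hη' hpos]
  have hlevels : ∀ᶠ c in 𝓝[>] P.cmin, c ∈ P.levels := P.levels_mem_nhdsGT_cmin
  obtain ⟨c, hc, h, h'⟩ := (hlevels.and (hlow.and hlow')).exists
  exact ⟨c, hc, by linarith⟩

end Ends

end BistableField

section Velocity

variable {V V' V'' : ℝ → ℝ} {UM K x y : ℝ}

theorem A1.hasDerivAt (h : A1 V V' V'' UM) {u : ℝ} (hu : 0 < u) : HasDerivAt V (V' u) u :=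
  (h.1 u hu.le).hasDerivAt (Ici_mem_nhds hu)

theorem A1.hasDerivAt_mul_sub (h : A1 V V' V'' UM) {u : ℝ} (hu : 0 < u) :
    HasDerivAt (fun v => K * v - V v) (K - V' u) u :=
  (hasDerivAt_const_mul K).sub (h.hasDerivAt hu)

theorem A1.continuousOn_mul_sub (h : A1 V V' V'' UM) :
    ContinuousOn (fun v => K * v - V v) (Ici 0) :=
  (continuousOn_const.mul continuousOn_id).sub fun u hu => (h.1 u hu).continuousWithinAt

theorem A1.strictMonoOn_deriv (h : A1 V V' V'' UM) : StrictMonoOn V' (Icc 0 UM) := by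
  obtain ⟨-, hcont, hderiv, -, -, -, -, hUM, hmax, hzero⟩ := h
  have hcont' : ContinuousOn V' (Icc 0 UM) := hcont.mono Icc_subset_Ici_self
  have hderiv' : ∀ u ∈ interior (Icc 0 UM),
      HasDerivWithinAt V' (V'' u) (interior (Icc 0 UM)) u := by
    rw [interior_Icc]
    exact fun u hu => (hderiv u hu.1).hasDerivWithinAt
  have hsign := hasDerivWithinAt_forall_lt_or_forall_gt_of_forall_ne
    (convex_Icc 0 UM).interior hderiv' (m := 0) fun u hu => by
      rw [interior_Icc] at hu
      exact fun h0 => hu.2.ne ((hzero u hu.1).1 h0)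
  refine hsign.elim (fun hneg => ?_)
    (strictMonoOn_of_hasDerivWithinAt_pos (convex_Icc 0 UM) hcont' hderiv')
  have hanti := strictAntiOn_of_hasDerivWithinAt_neg (convex_Icc 0 UM) hcont' hderiv' hneg
  exact absurd (hmax (UM / 2) (half_pos hUM)) (hanti ⟨(half_pos hUM).le, (half_lt_self hUM).le⟩
    ⟨hUM.le, le_rfl⟩ (half_lt_self hUM)).not_ge

theorem A1.strictAntiOn_deriv (h : A1 V V' V'' UM) : StrictAntiOn V' (Ici UM) := by
  obtain ⟨-, hcont, hderiv, -, -, -, -, hUM, hmax, hzero⟩ := h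
  have hcont' : ContinuousOn V' (Ici UM) := hcont.mono (Ici_subset_Ici.2 hUM.le)
  have hderiv' : ∀ u ∈ interior (Ici UM), HasDerivWithinAt V' (V'' u) (interior (Ici UM)) u := by
    rw [interior_Ici]
    exact fun u hu => (hderiv u (hUM.trans hu)).hasDerivWithinAt
  have hsign := hasDerivWithinAt_forall_lt_or_forall_gt_of_forall_ne
    (convex_Ici UM).interior hderiv' (m := 0) fun u hu => by
      rw [interior_Ici] at hu
      exact fun h0 => (mem_Ioi.1 hu).ne' ((hzero u (hUM.trans hu)).1 h0)
  refine hsign.elim (strictAntiOn_of_hasDerivWithinAt_neg (convex_Ici UM) hcont' hderiv')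
    (fun hpos => ?_)
  have hmono := strictMonoOn_of_hasDerivWithinAt_pos (convex_Ici UM) hcont' hderiv' hpos
  exact absurd (hmax (UM + 1) (by linarith))
    (hmono self_mem_Ici (lt_add_one UM).le (lt_add_one UM)).not_ge

theorem A1.sub_le_mul_sub (h : A1 V V' V'' UM) {a p u : ℝ} (hp : p ≤ UM) (ha : 0 ≤ a)
    (hau : a ≤ u) (hup : u ≤ p) : V u - V a ≤ V' p * (u - a) := by
  have hmem : ∀ v ∈ interior (Icc a u), 0 < v ∧ v ≤ p := fun v hv => by
    rw [interior_Icc] at hv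
    exact ⟨ha.trans_lt hv.1, hv.2.le.trans hup⟩
  refine (convex_Icc a u).image_sub_le_mul_sub_of_deriv_le
    (fun v hv => ((h.1 v (ha.trans hv.1)).continuousWithinAt).mono fun w hw => ha.trans hw.1)
    (fun v hv => (h.hasDerivAt (hmem v hv).1).differentiableAt.differentiableWithinAt)
    (fun v hv => ?_) a ⟨le_rfl, hau⟩ u ⟨hau, le_rfl⟩ hau
  obtain ⟨hv0, hvp⟩ := hmem v hv
  rw [(h.hasDerivAt hv0).deriv]
  exact h.strictMonoOn_deriv.monotoneOn ⟨hv0.le, hvp.trans hp⟩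
    ⟨(ha.trans hau).trans hup, hp⟩ hvp

/-- `x` and `y` are the two critical points of `u ↦ K u - V u`, one on each side of the maximum
point `UM` of `V'`. -/
structure IsCriticalPair (V' : ℝ → ℝ) (UM K x y : ℝ) : Prop where
  mem_Ioo : x ∈ Ioo 0 UM
  lt_right : UM < y
  deriv_left : V' x = K
  deriv_right : V' y = K

namespace IsCriticalPair

variable {u : ℝ}

theorem lt (h : IsCriticalPair V' UM K x y) : x < y := h.mem_Ioo.2.trans h.lt_right

theorem pos (h : IsCriticalPair V' UM K x y) (hA1 : A1 V V' V'' UM) : 0 < K :=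
  h.deriv_left ▸ hA1.2.2.2.2.1 x h.mem_Ioo.1

theorem deriv_lt_of_lt (h : IsCriticalPair V' UM K x y) (hA1 : A1 V V' V'' UM) (hu0 : 0 ≤ u)
    (hu : u < x) : V' u < K :=
  h.deriv_left ▸ hA1.strictMonoOn_deriv ⟨hu0, (hu.trans h.mem_Ioo.2).le⟩
    (Ioo_subset_Icc_self h.mem_Ioo) hu

theorem deriv_lt_of_gt (h : IsCriticalPair V' UM K x y) (hA1 : A1 V V' V'' UM) (hu : y < u) :
    V' u < K :=
  h.deriv_right ▸ hA1.strictAntiOn_deriv h.lt_right.le (h.lt_right.trans hu).le hu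

theorem lt_deriv (h : IsCriticalPair V' UM K x y) (hA1 : A1 V V' V'' UM) (hu : u ∈ Ioo x y) :
    K < V' u := by
  rcases le_or_gt u UM with hM | hM
  · exact h.deriv_left.symm.trans_lt <| hA1.strictMonoOn_deriv (Ioo_subset_Icc_self h.mem_Ioo)
      ⟨(h.mem_Ioo.1.trans hu.1).le, hM⟩ hu.1
  · exact h.deriv_right.symm.trans_lt <| hA1.strictAntiOn_deriv hM.le h.lt_right.le hu.2

theorem strictMonoOn_Icc (h : IsCriticalPair V' UM K x y) (hA1 : A1 V V' V'' UM) :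
    StrictMonoOn (fun u => K * u - V u) (Icc 0 x) :=
  strictMonoOn_of_hasDerivWithinAt_pos (convex_Icc 0 x)
    (hA1.continuousOn_mul_sub.mono Icc_subset_Ici_self)
    (fun u hu => (hA1.hasDerivAt_mul_sub (by rw [interior_Icc] at hu; exact hu.1)).hasDerivWithinAt)
    fun u hu => sub_pos.2 <| by
      rw [interior_Icc] at hu
      exact h.deriv_lt_of_lt hA1 hu.1.le hu.2

theorem strictAntiOn_Icc (h : IsCriticalPair V' UM K x y) (hA1 : A1 V V' V'' UM) :
    StrictAntiOn (fun u => K * u - V u) (Icc x y) :=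
  strictAntiOn_of_hasDerivWithinAt_neg (convex_Icc x y)
    (hA1.continuousOn_mul_sub.mono fun u hu => h.mem_Ioo.1.le.trans hu.1)
    (fun u hu => (hA1.hasDerivAt_mul_sub (h.mem_Ioo.1.trans_le
      (interior_subset hu).1)).hasDerivWithinAt)
    fun u hu => sub_neg.2 <| by
      rw [interior_Icc] at hu
      exact h.lt_deriv hA1 hu

theorem strictMonoOn_Ici (h : IsCriticalPair V' UM K x y) (hA1 : A1 V V' V'' UM) :
    StrictMonoOn (fun u => K * u - V u) (Ici y) :=
  strictMonoOn_of_hasDerivWithinAt_pos (convex_Ici y)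
    (hA1.continuousOn_mul_sub.mono (Ici_subset_Ici.2 (h.mem_Ioo.1.trans h.lt).le))
    (fun u hu => (hA1.hasDerivAt_mul_sub ((h.mem_Ioo.1.trans h.lt).trans_le
      (interior_subset hu : u ∈ Ici y))).hasDerivWithinAt)
    fun u hu => sub_pos.2 <| by
      rw [interior_Ici] at hu
      exact h.deriv_lt_of_gt hA1 hu

end IsCriticalPair

theorem isCriticalPair {uMx umx : ℝ → ℝ} (hA1 : A1 V V' V'' UM) (huMx : UMaxHyp V' UM uMx)
    (humx : UMinHyp V' UM umx) (hK0 : V' 0 < K) (hKM : K < V' UM) :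
    IsCriticalPair V' UM K (uMx K) (umx K) := by
  obtain ⟨hmem, hderiv⟩ := huMx K hK0 hKM
  obtain ⟨hlt, hderiv'⟩ := humx K (hderiv ▸ hA1.2.2.2.2.1 _ hmem.1) hKM
  exact ⟨hmem, hlt, hderiv, hderiv'⟩

end Velocity

section Coefficients

variable {κ : ℝ → ℝ} {τ p u : ℝ}

theorem g1TV_pos (hA2 : A2 κ) (hτ : 0 < τ) (hu : 0 < u) : 0 < g1TV κ τ u :=
  one_div_pos.2 (mul_pos hτ (hA2.2 _ (one_div_pos.2 hu)))

theorem g2TV_eq (κ : ℝ → ℝ) (τ u : ℝ) : g2TV κ τ u = g1TV κ τ u * (u / 2) := by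
  rw [g2TV, g1TV]
  ring

theorem g2TV_pos (hA2 : A2 κ) (hτ : 0 < τ) (hu : 0 < u) : 0 < g2TV κ τ u :=
  g2TV_eq κ τ u ▸ mul_pos (g1TV_pos hA2 hτ hu) (half_pos hu)

theorem continuousOn_g1TV (hA2 : A2 κ) (hτ : 0 < τ) : ContinuousOn (g1TV κ τ) (Ioi 0) := by
  have hcomp : ContinuousOn (fun u => κ (1 / u)) (Ioi 0) :=
    hA2.1.continuousOn.comp (continuousOn_const.div continuousOn_id fun u hu => ne_of_gt hu)
      fun u hu => mem_Ioi.2 (one_div_pos.2 hu)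
  exact continuousOn_const.div (continuousOn_const.mul hcomp) fun u hu =>
    (mul_pos hτ (hA2.2 _ (one_div_pos.2 hu))).ne'

theorem continuousOn_g2TV (hA2 : A2 κ) (hτ : 0 < τ) : ContinuousOn (g2TV κ τ) (Ioi 0) :=
  ((continuousOn_g1TV hA2 hτ).mul (continuousOn_id.div_const 2)).congr fun u _ => g2TV_eq κ τ u

/-- The substitution `u = 1 / ρ` turns condition (H) into divergence of `∫ g₂` at `0`. -/
theorem not_integrableOn_g2TV (hA2 : A2 κ) (hτ : 0 < τ) (hH : CondH κ) (hp : 0 < p) :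
    ¬ IntegrableOn (g2TV κ τ) (Ioc 0 p) := fun hint => hH <| by
  have hunit : IntegrableOn (g2TV κ τ) ((fun ρ : ℝ => ρ⁻¹) '' Ioi 1) := by
    have hrest : IntegrableOn (g2TV κ τ) (Icc p 1) :=
      ((continuousOn_g2TV hA2 hτ).mono fun u hu => hp.trans_le hu.1).integrableOn_Icc
    refine (hint.union hrest).mono_set ?_
    rintro _ ⟨ρ, hρ, rfl⟩
    have hpos : 0 < ρ⁻¹ := inv_pos.2 (one_pos.trans hρ)
    exact (le_total ρ⁻¹ p).imp (fun h => ⟨hpos, h⟩) fun h => ⟨h, (inv_lt_one_of_one_lt₀ hρ).le⟩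
  have hsubst : IntegrableOn (fun ρ => 2 * τ * (|-(ρ ^ 2)⁻¹| • g2TV κ τ ρ⁻¹)) (Ioi 1) :=
    ((integrableOn_image_iff_integrableOn_abs_deriv_smul measurableSet_Ioi
      (fun ρ hρ => (hasDerivAt_inv (one_pos.trans hρ).ne').hasDerivWithinAt)
      inv_injective.injOn _).1 hunit).const_mul (2 * τ)
  refine hsubst.congr_fun (fun ρ hρ => ?_) measurableSet_Ioi
  have hρ0 : 0 < ρ := one_pos.trans hρ
  have hκ := hA2.2 ρ hρ0
  simp only [g2TV, one_div, inv_inv, smul_eq_mul, abs_neg, abs_of_pos (inv_pos.2 (pow_pos hρ0 2))]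
  field_simp

end Coefficients

section WaveFunction

variable {V V' V'' : ℝ → ℝ} {UM K x y c u : ℝ}

theorem fTV_eq_zero_iff (hK : K ≠ 0) : fTV V K c u = 0 ↔ K * u - V u = c := by
  rw [fTV, div_eq_zero_iff, or_iff_left hK, sub_eq_zero]

theorem continuousOn_fdTV (hA1 : A1 V V' V'' UM) : ContinuousOn (fdTV V' K) (Ici 0) :=
  (continuousOn_const.sub hA1.2.1).div_const K

theorem fdTV_of_deriv_eq (h : V' u = K) : fdTV V' K u = 0 := by
  rw [fdTV, h, sub_self, zero_div]

theorem IsCriticalPair.fdTV_neg (h : IsCriticalPair V' UM K x y) (hA1 : A1 V V' V'' UM)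
    (hu : u ∈ Ioo x y) : fdTV V' K u < 0 :=
  div_neg_of_neg_of_pos (sub_neg.2 (h.lt_deriv hA1 hu)) (h.pos hA1)

end WaveFunction

namespace BistableField

theorem exists_add_eq_zero {P : BistableField} {k k' ν ν' : ℝ → ℝ} (hk : ContinuousOn k P.dom)
    (hk' : ContinuousOn k' P.dom) (hν : P.IsConnectionSpeed k ν) (hν' : P.IsConnectionSpeed k' ν')
    (hneg : ∃ c ∈ P.levels, ν c + ν' c < 0) (hpos : ∃ c ∈ P.levels, 0 < ν c + ν' c) :
    ∃ c ∈ P.levels, ν c + ν' c = 0 ∧ (∀ c' ∈ P.levels, c' < c → ν c' + ν' c' < 0) ∧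
      (∀ c' ∈ P.levels, c < c' → 0 < ν c' + ν' c') ∧
      ∀ c' ∈ P.levels, ν c' + ν' c' = 0 → c' = c := by
  have hmono : StrictMonoOn (fun c => ν c + ν' c) P.levels :=
    hν.strictMonoOn.add hν'.strictMonoOn
  obtain ⟨c₁, hc₁, h₁⟩ := hneg
  obtain ⟨c₂, hc₂, h₂⟩ := hpos
  obtain ⟨c, hc, h0⟩ := isPreconnected_Ioo.intermediate_value hc₁ hc₂
    ((hν.continuousOn hk).add (hν'.continuousOn hk')) ⟨h₁.le, h₂.le⟩
  exact ⟨c, hc, h0, fun c' hc' h => (hmono hc' hc h).trans_eq h0,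
    fun c' hc' h => h0.symm.trans_lt (hmono hc hc' h),
    fun c' hc' h => hmono.injOn hc' hc (h.trans h0.symm)⟩

end BistableField

section TrafficField

variable {V V' V'' κ u₁ u₀ u₂ μ μ' : ℝ → ℝ} {τ UM K x y cmin cmax : ℝ}

/-- The bistable field of the traveling-wave system, with `F u = K u - V u` and the factor `1 / K`
of `f` moved into `g₁`. -/
@[simps]
def tvField (hA1 : A1 V V' V'' UM) (hA2 : A2 κ) (hτ : 0 < τ) (hxy : IsCriticalPair V' UM K x y)
    (hlt : cmin < cmax) (hz : ∀ c ∈ Ioo cmin cmax, ZerosD1 V K c (u₁ c) (u₀ c) (u₂ c)) :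
    BistableField where
  dom := Ioi 0
  g₁ u := g1TV κ τ u / K
  g₂ := g2TV κ τ
  F u := K * u - V u
  cmin := cmin
  cmax := cmax
  peak := x
  valley := y
  left := u₁
  mid := u₀
  right := u₂
  isOpen_dom := isOpen_Ioi
  ordConnected_dom := ordConnected_Ioi
  continuousOn_g₁ := (continuousOn_g1TV hA2 hτ).div_const K
  continuousOn_g₂ := continuousOn_g2TV hA2 hτ
  continuousOn_F := hA1.continuousOn_mul_sub.mono Ioi_subset_Ici_self
  g₁_pos _ hu := div_pos (g1TV_pos hA2 hτ hu) (hxy.pos hA1)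
  g₂_pos _ hu := g2TV_pos hA2 hτ hu
  strictMonoOn_Iic := (hxy.strictMonoOn_Icc hA1).mono fun _ hu => ⟨le_of_lt hu.1, hu.2⟩
  strictAntiOn_Icc := (hxy.strictAntiOn_Icc hA1).mono inter_subset_right
  strictMonoOn_Ici := (hxy.strictMonoOn_Ici hA1).mono inter_subset_right
  cmin_lt_cmax := hlt
  left_mem_dom c hc := (hz c hc).1
  right_mem_dom c hc := (hz c hc).1.trans ((hz c hc).2.1.trans (hz c hc).2.2.1)
  left_lt_mid c hc := (hz c hc).2.1
  mid_lt_right c hc := (hz c hc).2.2.1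
  F_left c hc := (fTV_eq_zero_iff (hxy.pos hA1).ne').1 (hz c hc).2.2.2.1
  F_mid c hc := (fTV_eq_zero_iff (hxy.pos hA1).ne').1 (hz c hc).2.2.2.2.1
  F_right c hc := (fTV_eq_zero_iff (hxy.pos hA1).ne').1 (hz c hc).2.2.2.2.2.1

variable (hA1 : A1 V V' V'' UM) (hA2 : A2 κ) (hτ : 0 < τ) (hxy : IsCriticalPair V' UM K x y)
  (hlt : cmin < cmax) (hz : ∀ c ∈ Ioo cmin cmax, ZerosD1 V K c (u₁ c) (u₀ c) (u₂ c))

theorem tvField_force (c u : ℝ) :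
    (tvField hA1 hA2 hτ hxy hlt hz).force c u = g1TV κ τ u * fTV V K c u :=
  (div_mul_eq_mul_div _ _ _).trans (mul_div_assoc _ _ _)

theorem isConnectionSpeed_of_hasHE1
    (h : ∀ c ∈ Ioo cmin cmax, HasHE1 V V' κ τ K c (μ c) (u₁ c) (u₂ c)) :
    (tvField hA1 hA2 hτ hxy hlt hz).IsConnectionSpeed
      (fun u => g2TV κ τ u * fdTV V' K u) μ := fun c hc => by
  obtain ⟨u, w, ⟨hu, hw⟩, -, hua, hub, hwa, hwb, hpos⟩ := h c hc
  refine exists_isOrbitGraph hu (fun z => (hw z).congr_deriv ?_) hpos hua hub hwa hwb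
  rw [tvField_force, tvField_g₂, hTV]
  ring

/-- Reversing time turns a decreasing front into an increasing one and changes the sign of the
damping. -/
theorem isConnectionSpeed_of_hasHE2
    (h : ∀ c ∈ Ioo cmin cmax, HasHE2 V V' κ τ K c (μ' c) (u₁ c) (u₂ c)) :
    (tvField hA1 hA2 hτ hxy hlt hz).IsConnectionSpeed
      (fun u => -(g2TV κ τ u * fdTV V' K u)) (fun c => -μ' c) := fun c hc => by
  obtain ⟨u, w, ⟨hu, hw⟩, -, hua, hub, hwa, hwb, hneg⟩ := h c hc
  refine exists_isOrbitGraph (u := fun z => u (-z)) (w := fun z => -w (-z))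
    (fun z => ?_) (fun z => ?_) (fun z => neg_pos.2 (hneg (-z)))
    (hub.comp tendsto_neg_atBot_atTop) (hua.comp tendsto_neg_atTop_atBot)
    (by simpa only [neg_zero, Function.comp_def] using (hwb.comp tendsto_neg_atBot_atTop).neg)
    (by simpa only [neg_zero, Function.comp_def] using (hwa.comp tendsto_neg_atTop_atBot).neg)
  · exact ((hu (-z)).scomp z (hasDerivAt_neg z)).congr_deriv (by simp only [neg_smul, one_smul])
  · refine ((hw (-z)).scomp z (hasDerivAt_neg z)).neg.congr_deriv ?_
    rw [tvField_force, tvField_g₂, hTV]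
    simp only [neg_smul, one_smul]
    ring

theorem tendsto_tvField_left (hcmin : cmin = -V 0) :
    Tendsto (tvField hA1 hA2 hτ hxy hlt hz).left (𝓝[>] cmin) (𝓝 0) := by
  set P := tvField hA1 hA2 hτ hxy hlt hz
  have hlevels : ∀ᶠ c in 𝓝[>] cmin, c ∈ P.levels := P.levels_mem_nhdsGT_cmin
  refine tendsto_order.2 ⟨fun a ha => ?_, fun a ha => ?_⟩
  · exact hlevels.mono fun c hc => ha.trans (hz c hc).1
  · obtain ⟨v, hv0, hv⟩ := exists_between (lt_min ha hxy.mem_Ioo.1)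
    obtain ⟨hva, hvx⟩ := lt_min_iff.1 hv
    have hFv : cmin < K * v - V v := by
      simpa only [hcmin, mul_zero, zero_sub] using
        hxy.strictMonoOn_Icc hA1 ⟨le_rfl, hxy.mem_Ioo.1.le⟩ ⟨hv0.le, hvx.le⟩ hv0
    filter_upwards [hlevels, Ioo_mem_nhdsGT hFv] with c hc hlt
    exact (BistableField.left_lt_of_lt_F hc hv0 hvx.le hlt.2).trans hva

theorem mul_g2TV_le_tvField_force {c p u : ℝ} (hc : c ∈ Ioo cmin cmax) (hpx : p < x)
    (hu : 2 * u₁ c ≤ u) (hup : u ≤ p) :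
    fdTV V' K p * g2TV κ τ u ≤ (tvField hA1 hA2 hτ hxy hlt hz).force c u := by
  have hu₁ : 0 < u₁ c := (hz c hc).1
  have hu0 : 0 < u := (mul_pos two_pos hu₁).trans_le hu
  have hK : 0 < K := hxy.pos hA1
  have hF : K * u₁ c - V (u₁ c) = c := (tvField hA1 hA2 hτ hxy hlt hz).F_left c hc
  have hp : 0 ≤ K - V' p := sub_nonneg.2 (hxy.deriv_lt_of_lt hA1 (hu0.le.trans hup) hpx).le
  have hV : V u - V (u₁ c) ≤ V' p * (u - u₁ c) :=
    hA1.sub_le_mul_sub (hpx.trans hxy.mem_Ioo.2).le hu₁.le (by linarith) hup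
  have hf : fdTV V' K p * (u / 2) ≤ fTV V K c u := by
    rw [fdTV, fTV, div_mul_eq_mul_div]
    refine div_le_div_of_nonneg_right ?_ hK.le
    calc (K - V' p) * (u / 2) ≤ (K - V' p) * (u - u₁ c) :=
          mul_le_mul_of_nonneg_left (by linarith) hp
      _ ≤ K * u - V u - c := by linarith
  rw [tvField_force, g2TV_eq, mul_left_comm]
  exact mul_le_mul_of_nonneg_left hf (g1TV_pos hA2 hτ hu0).le

theorem tvField_hasSingularEdge (hH : CondH κ) (hcmin : cmin = -V 0) :
    (tvField hA1 hA2 hτ hxy hlt hz).HasSingularEdge 0 (x / 2) (fdTV V' K (x / 2))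
      (fun c => 2 * u₁ c) := by
  have hx : 0 < x := hxy.mem_Ioo.1
  have hlevels : ∀ᶠ c in 𝓝[>] cmin, c ∈ Ioo cmin cmax := Ioo_mem_nhdsGT hlt
  exact {
    dom_subset := Subset.rfl
    Ioc_subset_dom := Ioc_subset_Ioi_self
    lt := half_pos hx
    lt_peak := half_lt_self hx
    pos := div_pos (sub_pos.2 (hxy.deriv_lt_of_lt hA1 (half_pos hx).le (half_lt_self hx)))
      (hxy.pos hA1)
    tendsto := by
      simpa only [mul_zero, tvField_left, tvField_cmin] using
        (tendsto_tvField_left hA1 hA2 hτ hxy hlt hz hcmin).const_mul 2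
    left_le := hlevels.mono fun c hc => le_mul_of_one_le_left (hz c hc).1.le one_le_two
    le_force := hlevels.mono fun c hc u hu =>
      mul_g2TV_le_tvField_force hA1 hA2 hτ hxy hlt hz hc (half_lt_self hx) hu.1.le hu.2.le
    not_integrableOn := not_integrableOn_g2TV hA2 hτ hH (half_pos hx) }

theorem exists_add_neg_of_condH (hH : CondH κ) (hcmin : cmin = -V 0)
    (hμ : (tvField hA1 hA2 hτ hxy hlt hz).IsConnectionSpeed
      (fun u => g2TV κ τ u * fdTV V' K u) μ)
    (hμ' : (tvField hA1 hA2 hτ hxy hlt hz).IsConnectionSpeed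
      (fun u => -(g2TV κ τ u * fdTV V' K u)) μ') :
    ∃ c ∈ (tvField hA1 hA2 hτ hxy hlt hz).levels, μ c + μ' c < 0 := by
  have hd : ContinuousOn (fdTV V' K) (Ici 0) := continuousOn_fdTV hA1
  refine (tvField_hasSingularEdge hA1 hA2 hτ hxy hlt hz hH hcmin).exists_add_neg
    (d₀ := fdTV V' K 0) (hd.mono Ioi_subset_Ici_self) (fun u hu => ?_)
    ((hd 0 self_mem_Ici).mono Ioi_subset_Ici_self) hμ hμ'
  have hu0 : 0 ≤ u := hu.1.le
  have hV' : V' 0 ≤ V' u := hA1.strictMonoOn_deriv.monotoneOn ⟨le_rfl, hA1.2.2.2.2.2.2.2.1.le⟩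
    ⟨hu0, by linarith [hu.2, hxy.mem_Ioo.1, hxy.mem_Ioo.2]⟩ hu0
  exact div_le_div_of_nonneg_right (sub_le_sub_left hV' K) (hxy.pos hA1).le

end TrafficField

theorem CondC.c1f_eq {V V' κ umx : ℝ → ℝ} {UM K K₁ : ℝ} (hC : CondC V' κ UM K₁ K)
    (hK1 : K1Hyp V V' UM umx K₁) (hK : 0 < K) :
    c1f V umx K = cmf V umx K ∨ CondH κ ∧ c1f V umx K = c0v V := by
  obtain ⟨-, -, hlow, heq, hhigh⟩ := hK1
  refine hC.imp (fun h => max_eq_right (hhigh K h.1 h.2).le)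
    fun ⟨hH, _, hle⟩ => ⟨hH, max_eq_left ?_⟩
  rcases hle.eq_or_lt with rfl | hlt
  exacts [heq.le, (hlow K hK hlt).le]

end Development

theorem stmt8
    (V V' V'' κ : ℝ → ℝ) (τ UM K K₁ : ℝ) (uMx umx : ℝ → ℝ)
    (u1c u0c u2c μbc μfc : ℝ → ℝ)
    (hA1 : A1 V V' V'' UM) (hA2 : A2 κ) (hτ : 0 < τ)
    (huMx : UMaxHyp V' UM uMx) (humx : UMinHyp V' UM umx)
    (hK1 : K1Hyp V V' UM umx K₁)
    (hK0 : V' 0 < K) (hKM : K < V' UM)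
    (hC : CondC V' κ UM K₁ K)
    (hne : c1f V umx K < cMf V uMx K)
    (hz : ∀ cc, c1f V umx K < cc → cc < cMf V uMx K →
      ZerosD1 V K cc (u1c cc) (u0c cc) (u2c cc))
    (hμb : ∀ cc, c1f V umx K < cc → cc < cMf V uMx K →
      ∀ μ, HasHE1 V V' κ τ K cc μ (u1c cc) (u2c cc) ↔ μ = μbc cc)
    (hμf : ∀ cc, c1f V umx K < cc → cc < cMf V uMx K →
      ∀ μ, HasHE2 V V' κ τ K cc μ (u1c cc) (u2c cc) ↔ μ = μfc cc) :
    ∃ cs : ℝ, c1f V umx K < cs ∧ cs < cMf V uMx K ∧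
      (∀ cc, c1f V umx K < cc → cc < cs → μbc cc < μfc cc) ∧
      (∀ cc, cs < cc → cc < cMf V uMx K → μfc cc < μbc cc) ∧
      μbc cs = μfc cs ∧
      (∀ cs', c1f V umx K < cs' → cs' < cMf V uMx K → μbc cs' = μfc cs' → cs' = cs) ∧
      HasHE1 V V' κ τ K cs (μbc cs) (u1c cs) (u2c cs) ∧
      HasHE2 V V' κ τ K cs (μbc cs) (u1c cs) (u2c cs) := by
  have hxy := isCriticalPair hA1 huMx humx hK0 hKM
  have hz' : ∀ c ∈ Ioo (c1f V umx K) (cMf V uMx K), ZerosD1 V K c (u1c c) (u0c c) (u2c c) :=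
    fun c hc => hz c hc.1 hc.2
  let P := tvField hA1 hA2 hτ hxy hne hz'
  have hd : ContinuousOn (fdTV V' K) P.dom := (continuousOn_fdTV hA1).mono Ioi_subset_Ici_self
  have hneg : ∀ u ∈ Ioo P.peak P.valley, fdTV V' K u < 0 := fun u hu => hxy.fdTV_neg hA1 hu
  have hb : P.IsConnectionSpeed (fun u => g2TV κ τ u * fdTV V' K u) μbc :=
    isConnectionSpeed_of_hasHE1 hA1 hA2 hτ hxy hne hz' fun c hc => (hμb c hc.1 hc.2 _).2 rfl
  have hf : P.IsConnectionSpeed (fun u => -(g2TV κ τ u * fdTV V' K u)) (fun c => -μfc c) :=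
    isConnectionSpeed_of_hasHE2 hA1 hA2 hτ hxy hne hz' fun c hc => (hμf c hc.1 hc.2 _).2 rfl
  have hhigh : ∃ c ∈ P.levels, 0 < μbc c + -μfc c :=
    P.exists_add_pos hd (fdTV_of_deriv_eq hxy.deriv_left) hneg rfl hb hf
  have hlow : ∃ c ∈ P.levels, μbc c + -μfc c < 0 := by
    rcases hC.c1f_eq hK1 (hxy.pos hA1) with hvalley | ⟨hH, hzero⟩
    · exact P.exists_add_neg_of_F_valley hd (fdTV_of_deriv_eq hxy.deriv_right) hneg hvalley.symm
        hb hf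
    · exact exists_add_neg_of_condH hA1 hA2 hτ hxy hne hz' hH hzero hb hf
  obtain ⟨cs, hcs, heq, hlt, hgt, huniq⟩ := BistableField.exists_add_eq_zero
    (P.continuousOn_g₂.mul hd) (P.continuousOn_g₂.mul hd).neg hb hf hlow hhigh
  rw [add_neg_eq_zero] at heq
  exact ⟨cs, hcs.1, hcs.2, fun c h h' => by linarith [hlt c ⟨h, h'.trans hcs.2⟩ h'],
    fun c h h' => by linarith [hgt c ⟨hcs.1.trans h, h'⟩ h], heq,
    fun c h h' hc => huniq c ⟨h, h'⟩ (add_neg_eq_zero.2 hc),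
    (hμb cs hcs.1 hcs.2 _).2 rfl, (hμf cs hcs.1 hcs.2 _).2 heq⟩

end TrafficTW
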